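/- Let s be an even integer with s ≥ 6, N ≥ 2s, ν ≥ π, and let C = {x_1,…,x_M} ⊂ SO(3) be pairwise distinct points with separation ρ(C) ≥ ν/(N+1). Consider the M×M matrices σ_{00} = (σ_N(x_a,x_b))_{a,b}, σ_{0i} = (X_i^x σ_N(x_a,x_b))_{a,b}, σ_{i0} = (X_i^y σ_N(x_a,x_b))_{a,b}, and σ_{ij} = (X_i^x X_j^y σ_N(x_a,x_b))_{a,b} for i,j ∈ {1,2,3}, and let ‖·‖_∞ denote the maximum-absolute-row-sum matrix norm. Then: ‖I − σ_{00}‖_∞ ≤ C_{0,s}/ν^s, and if C_{0,s}/ν^s < 1 then σ_{00} is invertible with ‖σ_{00}⁻¹‖_∞ ≤ 1/(1 − C_{0,s}/ν^s); ‖σ_{0i}‖_∞ ≤ C_{1,s}(N+1)/ν^s and ‖σ_{i0}‖_∞ ≤ C_{1,s}(N+1)/ν^s; ‖σ_{ij}‖_∞ ≤ C_{2,s}(N+1)²/ν^s for i ≠ j; and ‖(−σ̃_N″(0))·I − σ_{ii}‖_∞ ≤ C_{2,s}(N+1)²/ν^s, and if C_{2,s}/(c_s ν^s) < 1 then σ_{ii}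 is invertible with ‖σ_{ii}⁻¹‖_∞ ≤ 1/(c_s(N+1)²(1 − C_{2,s}/(c_s ν^s))), where c_s = 0.999/(2(s+1)). -/

import Mathlib

noncomputable section

abbrev Mat3 := Matrix (Fin 3) (Fin 3) ℝ

/-- membership in SO(3) -/
def IsSO3 (x : Mat3) : Prop := x.transpose * x = 1 ∧ x.det = 1

/-- rotation angle -/
def rotAngle (x : Mat3) : ℝ := Real.arccos ((Matrix.trace x - 1) / 2)

/-- generators of so(3) -/
def Lgen : Fin 3 → Mat3 :=
  ![!![0, 0, 0; 0, 0, -1; 0, 1, 0],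
    !![0, 0, 1; 0, 0, 0; -1, 0, 0],
    !![0, -1, 0; 1, 0, 0; 0, 0, 0]]

/-- derivative in the first variable along generator `i` -/
def Xx (i : Fin 3) (f : Mat3 → Mat3 → ℝ) : Mat3 → Mat3 → ℝ :=
  fun x y => deriv (fun t : ℝ => f (x * NormedSpace.exp (t • Lgen i)) y) 0

/-- derivative in the second variable along generator `i` -/
def Xy (i : Fin 3) (f : Mat3 → Mat3 → ℝ) : Mat3 → Mat3 → ℝ :=
  fun x y => deriv (fun t : ℝ => f x (y * NormedSpace.exp (t • Lgen i))) 0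

/-- iterated integrals of the sign of the Chebyshev polynomial: the perfect B-spline chain -/
def fspline (s : ℕ) : ℕ → ℝ → ℝ
  | 0 => fun x => (-1 : ℝ) ^ (s - 1) * Real.sign ((Polynomial.Chebyshev.U ℝ ((s : ℤ) - 1)).eval x)
  | (k + 1) => fun x => ∫ t in (-1 : ℝ)..x, fspline s k t

/-- the scaled perfect B-spline g̃_{s-1} -/
def gtilde (s : ℕ) (x : ℝ) : ℝ := fspline s (s - 1) (2 * x)

/-- discrete norm ‖g̃‖_{1,N} -/
def gnorm (s N : ℕ) : ℝ :=
  ∑ k ∈ Finset.Icc (-(N : ℤ)) (N : ℤ), gtilde s ((k : ℝ) / (2 * ((N : ℝ) + 1)))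

/-- the trigonometric kernel σ̃_N (real-valued) -/
def sigmaT (s N : ℕ) (t : ℝ) : ℝ :=
  ((1 / (gnorm s N : ℂ)) *
      ∑ k ∈ Finset.Icc (-(N : ℤ)) (N : ℤ),
        (gtilde s ((k : ℝ) / (2 * ((N : ℝ) + 1))) : ℂ) * Complex.exp ((k : ℂ) * t * Complex.I)).re

/-- the zonal kernel σ_N on SO(3) -/
def sigmaK (s N : ℕ) (x y : Mat3) : ℝ := sigmaT s N (rotAngle (y⁻¹ * x))

/-- rotation axis components -/
def axisComp : Fin 3 → Mat3 → ℝ :=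
  ![fun x => (x 2 1 - x 1 2) / (2 * Real.sin (rotAngle x)),
    fun x => (x 0 2 - x 2 0) / (2 * Real.sin (rotAngle x)),
    fun x => (x 1 0 - x 0 1) / (2 * Real.sin (rotAngle x))]

/-- Levi-Civita symbol on `Fin 3` -/
def eps3 (a b c : Fin 3) : ℝ :=
  if (a, b, c) = (0, 1, 2) ∨ (a, b, c) = (1, 2, 0) ∨ (a, b, c) = (2, 0, 1) then 1
  else if (a, b, c) = (2, 1, 0) ∨ (a, b, c) = (1, 0, 2) ∨ (a, b, c) = (0, 2, 1) then -1
  else 0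

/-- constants c_{l,s} -/
def cConst : ℕ → ℕ → ℝ
  | 0, s => 1.02 * (Nat.factorial (s - 1)) * 2 ^ s * s
  | 1, s => 1.02 * (Nat.factorial (s - 1)) * 2 ^ s * (2 * s)
  | 2, s => 1.02 * (Nat.factorial (s - 1)) * 2 ^ s * (4 * s + 1)
  | _, s => 1.02 * (Nat.factorial (s - 1)) * 2 ^ s * (9 * s - 2)

/-- ζ(m) for natural m -/
def zetaNat (m : ℕ) : ℝ := ∑' n : ℕ, (1 : ℝ) / ((n : ℝ) + 1) ^ m

/-- constants C_{i,s} = 124 c_{i,s} ζ(s-2) -/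
def CConst (i s : ℕ) : ℝ := 124 * cConst i s * zetaNat (s - 2)

end

open scoped Real

/-- maximum absolute row sum norm -/
noncomputable def rowSumNorm {M : ℕ} (A : Matrix (Fin M) (Fin M) ℝ) : ℝ :=
  ⨆ a, ∑ b, |A a b|

/-!
The alternating sum of an antiderivative of high order over the Chebyshev nodes has the perfect
B-spline as its Peano kernel, so the Fourier transform of the spline at `ξ` is `ξ⁻ˢ` times a
bounded combination of exponentials. Poisson summation turns this decay into the bound
`|σ̃_N⁽ˡ⁾(t)| ≤ const · (N + 1)ˡ / ((N + 1) t)ˢ` for `l ≤ 2` and into a lower bound for `-σ̃_N″(0)`.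

On the rotation group `σ_N(x, y)` is a polynomial in `tr (y⁻¹x)`, which identifies the diagonal
blocks and bounds the generator derivatives by `|σ̃_N′|` and `|σ̃_N″|` at the rotation angle. The
logarithm does not decrease distances, so a volume comparison in `ℝ³` shows that at most
`(2R / θ + 1)³` of the `θ`-separated rotations lie within angle `R` of a given one, and the row
sums converge because `s ≥ 6`. Invertibility is the Neumann series.
-/

section

open MeasureTheory Set
open Polynomial.Chebyshev (node node_eq_one node_eq_neg_one node_mem_Icc node_lt)

/-! ### The alternating node functional -/

/-- The functional `Φ ↦ ∑ j < s, (-1)^j (Φ(x_j) - Φ(x_{j+1}))` on the decreasing Chebyshev nodes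
`x_j = cos (jπ/s)`. The perfect B-spline is, up to a factor, its Peano kernel. -/
noncomputable def alternatingNodeSum (s : ℕ) (Φ : ℝ → ℂ) : ℂ :=
  ∑ j ∈ Finset.range s, (-1) ^ j * (Φ (node s j) - Φ (node s (j + 1)))

lemma alternatingNodeSum_const_mul (s : ℕ) (c : ℂ) (Φ : ℝ → ℂ) :
    alternatingNodeSum s (fun x => c * Φ x) = c * alternatingNodeSum s Φ := by
  rw [alternatingNodeSum, alternatingNodeSum, Finset.mul_sum]
  exact Finset.sum_congr rfl fun j _ => by ring

lemma norm_alternatingNodeSum_le (s : ℕ) {Φ : ℝ → ℂ} {B : ℝ}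
    (hΦ : ∀ x ∈ Icc (-1 : ℝ) 1, ‖Φ x‖ ≤ B) : ‖alternatingNodeSum s Φ‖ ≤ 2 * s * B := by
  have hterm : ∀ j ∈ Finset.range s,
      ‖(-1 : ℂ) ^ j * (Φ (node s j) - Φ (node s (j + 1)))‖ ≤ 2 * B := fun j _ => by
    rw [norm_mul, norm_pow, norm_neg, norm_one, one_pow, one_mul]
    linarith [norm_sub_le (Φ (node s j)) (Φ (node s (j + 1))),
      hΦ _ (node_mem_Icc (n := s) (i := j)),
      hΦ _ (node_mem_Icc (n := s) (i := j + 1))]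
  calc ‖alternatingNodeSum s Φ‖ ≤ ∑ _j ∈ Finset.range s, 2 * B := norm_sum_le_of_le _ hterm
    _ = 2 * s * B := by rw [Finset.sum_const, Finset.card_range, nsmul_eq_mul]; ring

lemma node_two_mul_sub {s j : ℕ} (hs : s ≠ 0) (hj : j ≤ 2 * s) :
    node s (2 * s - j) = node s j := by
  have harg : ((2 * s - j : ℕ) : ℝ) * π / s = 2 * π - j * π / s := by
    push_cast [Nat.cast_sub hj]; field
  rw [node, node, harg, Real.cos_two_pi_sub]

lemma alternatingNodeSum_eq_sum_range_two_mul {s : ℕ} (hs : s ≠ 0) (Φ : ℝ → ℂ) :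
    alternatingNodeSum s Φ = ∑ j ∈ Finset.range (2 * s), (-1) ^ j * Φ (node s j) := by
  have hreflect : ∑ j ∈ Finset.range s, (-1 : ℂ) ^ (s + j) * Φ (node s (s + j)) =
      -∑ j ∈ Finset.range s, (-1 : ℂ) ^ j * Φ (node s (j + 1)) := by
    rw [← Finset.sum_range_reflect, ← Finset.sum_neg_distrib]
    refine Finset.sum_congr rfl fun j hj => ?_
    rw [Finset.mem_range] at hj
    have hindex : s + (s - 1 - j) = 2 * s - (j + 1) := by omega
    have hsign : (-1 : ℂ) ^ (2 * s - (j + 1)) = -(-1) ^ j := by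
      rw [neg_one_pow_congr (m := 2 * s - (j + 1)) (n := j + 1) (by grind), pow_succ, mul_neg_one]
    rw [hindex, hsign, node_two_mul_sub hs (by omega), neg_mul]
  rw [two_mul, Finset.sum_range_add, hreflect, alternatingNodeSum, ← sub_eq_add_neg,
    ← Finset.sum_sub_distrib]
  simp only [mul_sub]

lemma sum_range_zpow_pow_of_isPrimitiveRoot {K : Type*} [Field K] {n : ℕ} {z : K}
    (hz : IsPrimitiveRoot z n) (e : ℤ) :
    ∑ j ∈ Finset.range n, (z ^ e) ^ j = if (n : ℤ) ∣ e then (n : K) else 0 := by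
  split_ifs with h
  · simp [(hz.zpow_eq_one_iff_dvd e).2 h]
  · rw [geom_sum_eq (fun h1 => h ((hz.zpow_eq_one_iff_dvd e).1 h1)), ← zpow_natCast, ← zpow_mul,
      mul_comm, zpow_mul, zpow_natCast, hz.pow_eq_one, one_zpow, sub_self, zero_div]

/-- Only the frequencies `n - 2m` of `cos^n` that alias to the alternating sign survive. -/
lemma sum_neg_one_pow_mul_node_pow {s : ℕ} (hs : s ≠ 0) (n : ℕ) :
    ∑ j ∈ Finset.range (2 * s), (-1 : ℂ) ^ j * (node s j : ℂ) ^ n =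
      2 * s / 2 ^ n *
        ∑ m ∈ Finset.range (n + 1) with (2 * s : ℤ) ∣ s + (2 * (m : ℕ) - n), n.choose m := by
  set z := Complex.exp (2 * π * Complex.I / (2 * s : ℕ)) with hz
  have hz0 : z ≠ 0 := Complex.exp_ne_zero _
  have hroot : IsPrimitiveRoot z (2 * s) := Complex.isPrimitiveRoot_exp (2 * s) (by omega)
  have hneg_one : z ^ s = -1 := by
    rw [hz, ← Complex.exp_nat_mul, ← Complex.exp_pi_mul_I]
    congr 1; push_cast; field
  have hnode (j : ℕ) : (node s j : ℂ) = (z ^ j + z⁻¹ ^ j) / 2 := by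
    rw [node, Complex.ofReal_cos, Complex.cos, inv_pow, hz, ← Complex.exp_nat_mul,
      ← Complex.exp_neg]
    congr 3 <;> · push_cast; field
  have hterm (j : ℕ) : (-1 : ℂ) ^ j * (node s j : ℂ) ^ n =
      ∑ m ∈ Finset.range (n + 1), (n.choose m : ℂ) / 2 ^ n * (z ^ (s + (2 * m - n) : ℤ)) ^ j := by
    rw [hnode, div_pow, add_pow, Finset.sum_div, Finset.mul_sum, ← hneg_one]
    refine Finset.sum_congr rfl fun m hm => ?_
    have hexp : (s + (2 * m - n) : ℤ) = s + m - ((n - m : ℕ) : ℤ) := by grind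
    rw [hexp, zpow_sub₀ hz0, zpow_add₀ hz0]
    simp only [zpow_natCast]
    field
  simp only [hterm]
  rw [Finset.sum_comm]
  simp only [← Finset.mul_sum]
  have hsum (m : ℕ) := sum_range_zpow_pow_of_isPrimitiveRoot hroot (s + (2 * m - n))
  push_cast at hsum
  simp only [hsum, mul_ite, mul_zero]
  rw [← Finset.sum_filter, Nat.cast_sum, Finset.mul_sum]
  exact Finset.sum_congr rfl fun m _ => by ring

lemma alternatingNodeSum_pow_of_lt {s n : ℕ} (hn : n < s) :
    alternatingNodeSum s (fun x => (x : ℂ) ^ n) = 0 := by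
  have hempty : {m ∈ Finset.range (n + 1) | (2 * s : ℤ) ∣ s + (2 * (m : ℕ) - n)} = ∅ := by
    refine Finset.filter_false_of_mem fun m hm hdvd => ?_
    rw [Finset.mem_range] at hm
    have := Int.eq_zero_of_dvd_of_nonneg_of_lt (by omega) (by omega) hdvd
    omega
  rw [alternatingNodeSum_eq_sum_range_two_mul (by omega), sum_neg_one_pow_mul_node_pow (by omega),
    hempty]
  simp

lemma alternatingNodeSum_pow_self {s : ℕ} (hs : s ≠ 0) :
    alternatingNodeSum s (fun x => (x : ℂ) ^ s) = 4 * s / 2 ^ s := by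
  have hends : {m ∈ Finset.range (s + 1) | (2 * s : ℤ) ∣ s + (2 * (m : ℕ) - s)} = {0, s} := by
    ext m
    have hdvd : (2 * s : ℤ) ∣ s + (2 * m - s) ↔ s ∣ m := by
      rw [show (s + (2 * m - s) : ℤ) = 2 * m by ring, mul_dvd_mul_iff_left two_ne_zero,
        Int.natCast_dvd_natCast]
    simp only [Finset.mem_filter, Finset.mem_range, hdvd, Finset.mem_insert, Finset.mem_singleton]
    refine ⟨fun ⟨_, h⟩ => ?_, by rintro (rfl | rfl) <;> simp⟩
    exact (Nat.eq_zero_or_pos m).imp_right fun h0 => le_antisymm (by omega) (Nat.le_of_dvd h0 h)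
  rw [alternatingNodeSum_eq_sum_range_two_mul hs, sum_neg_one_pow_mul_node_pow hs, hends,
    Finset.sum_pair hs.symm, Nat.choose_zero_right, Nat.choose_self]
  push_cast
  ring

lemma alternatingNodeSum_pow_add_two {s : ℕ} (hs : 2 ≤ s) :
    alternatingNodeSum s (fun x => (x : ℂ) ^ (s + 2)) = s * (s + 2) / 2 ^ s := by
  have hends : {m ∈ Finset.range (s + 2 + 1) | (2 * s : ℤ) ∣ s + (2 * (m : ℕ) - (s + 2 : ℕ))} =
      {1, s + 1} := by
    ext m
    have hdvd : (2 * s : ℤ) ∣ s + (2 * m - (s + 2 : ℕ)) ↔ (s : ℤ) ∣ m - 1 := by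
      rw [show (s + (2 * m - (s + 2 : ℕ)) : ℤ) = 2 * (m - 1) by push_cast; ring,
        mul_dvd_mul_iff_left two_ne_zero]
    simp only [Finset.mem_filter, Finset.mem_range, hdvd, Finset.mem_insert, Finset.mem_singleton]
    refine ⟨fun ⟨_, c, hc⟩ => ?_, by rintro (rfl | rfl) <;> simp⟩
    have hlo : -1 < c := by nlinarith
    have hhi : c < 2 := by nlinarith
    interval_cases c <;> omega
  rw [alternatingNodeSum_eq_sum_range_two_mul (by omega), sum_neg_one_pow_mul_node_pow (by omega),
    hends, Finset.sum_pair (by omega), Nat.choose_one_right,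
    Nat.choose_symm_of_eq_add (show s + 2 = (s + 1) + 1 by ring), Nat.choose_one_right]
  push_cast
  ring

/-! ### The spline chain and its moments -/

lemma sign_sin_of_mem_Ioo {j : ℕ} {x : ℝ} (hx : x ∈ Ioo (j * π) ((j + 1) * π)) :
    Real.sign (Real.sin x) = (-1) ^ j := by
  have hpos : 0 < Real.sin (x - j * π) :=
    Real.sin_pos_of_pos_of_lt_pi (by linarith [hx.1]) (by linarith [hx.2])
  rw [Real.sin_sub_nat_mul_pi] at hpos
  rcases neg_one_pow_eq_or ℝ j with h | h <;> rw [h] at hpos ⊢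
  · exact Real.sign_of_pos (by linarith)
  · exact Real.sign_of_neg (by linarith)

lemma real_sign_mul_of_pos (r : ℝ) {c : ℝ} (hc : 0 < c) : Real.sign (r * c) = Real.sign r := by
  rcases lt_trichotomy r 0 with h | rfl | h
  · rw [Real.sign_of_neg h, Real.sign_of_neg (mul_neg_of_neg_of_pos h hc)]
  · rw [zero_mul]
  · rw [Real.sign_of_pos h, Real.sign_of_pos (mul_pos h hc)]

lemma sign_chebyshevU_cos (s : ℕ) {θ : ℝ} (hθ : θ ∈ Ioo 0 π) :
    Real.sign ((Polynomial.Chebyshev.U ℝ ((s : ℤ) - 1)).eval (Real.cos θ)) =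
      Real.sign (Real.sin (s * θ)) := by
  rw [← real_sign_mul_of_pos _ (Real.sin_pos_of_mem_Ioo hθ), Polynomial.Chebyshev.U_real_cos]
  push_cast
  rw [sub_add_cancel]

lemma exists_eq_cos_of_mem_Ioo_node {s j : ℕ} (hj : j < s) {x : ℝ}
    (hx : x ∈ Ioo (node s (j + 1)) (node s j)) :
    ∃ θ ∈ Ioo 0 π, x = Real.cos θ ∧ s * θ ∈ Ioo (j * π) ((j + 1) * π) := by
  have hs : (0 : ℝ) < s := by exact_mod_cast j.zero_le.trans_lt hj
  have harg {i : ℕ} (hi : i ≤ s) : Real.arccos (node s i) = i * π / s := by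
    refine Real.arccos_cos (by positivity) ?_
    rw [div_le_iff₀ hs, mul_comm]
    gcongr
  have hlo : -1 ≤ node s (j + 1) := node_mem_Icc.1
  have hhi : node s j ≤ 1 := node_mem_Icc.2
  have hl := Real.arccos_lt_arccos (hlo.trans hx.1.le) hx.2 hhi
  have hr := Real.arccos_lt_arccos hlo hx.1 (hx.2.le.trans hhi)
  rw [harg hj.le, div_lt_iff₀ hs] at hl
  rw [harg hj, lt_div_iff₀ hs] at hr
  push_cast at hr
  refine ⟨Real.arccos x, ⟨?_, ?_⟩, (Real.cos_arccos ?_ ?_).symm, ?_, ?_⟩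
  · exact Real.arccos_pos.2 (hx.2.trans_le hhi)
  · exact Real.arccos_lt_pi.2 (hlo.trans_lt hx.1)
  all_goals linarith [hx.1, hx.2]

lemma fspline_zero_apply (s : ℕ) (x : ℝ) : fspline s 0 x =
    (-1 : ℝ) ^ (s - 1) * Real.sign ((Polynomial.Chebyshev.U ℝ ((s : ℤ) - 1)).eval x) := rfl

lemma fspline_succ_apply (s k : ℕ) (x : ℝ) :
    fspline s (k + 1) x = ∫ t in (-1 : ℝ)..x, fspline s k t := rfl

lemma fspline_zero_of_mem_Ioo_node {s j : ℕ} (hj : j < s) {x : ℝ}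
    (hx : x ∈ Ioo (node s (j + 1)) (node s j)) : fspline s 0 x = (-1) ^ (s - 1 + j) := by
  obtain ⟨θ, hθ, rfl, hsθ⟩ := exists_eq_cos_of_mem_Ioo_node hj hx
  rw [fspline_zero_apply, sign_chebyshevU_cos s hθ, sign_sin_of_mem_Ioo hsθ, pow_add]

lemma abs_fspline_zero_le (s : ℕ) (x : ℝ) : |fspline s 0 x| ≤ 1 := by
  rw [fspline_zero_apply, abs_mul, abs_pow, abs_neg, abs_one, one_pow, one_mul]
  rcases Real.sign_apply_eq ((Polynomial.Chebyshev.U ℝ ((s : ℤ) - 1)).eval x) with h | h | h <;>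
    simp [h]

lemma measurable_real_sign : Measurable Real.sign := by
  unfold Real.sign
  exact .ite measurableSet_Iio measurable_const
    (.ite measurableSet_Ioi measurable_const measurable_const)

lemma measurable_fspline_zero (s : ℕ) : Measurable (fspline s 0) :=
  (measurable_real_sign.comp (Polynomial.continuous _).measurable).const_mul _

lemma intervalIntegrable_fspline (s k : ℕ) (a b : ℝ) :
    IntervalIntegrable (fspline s k) volume a b := by
  induction k generalizing a b with
  | zero =>
    refine (intervalIntegrable_const (c := (1 : ℝ))).mono_fun
      (measurable_fspline_zero s).aestronglyMeasurable (.of_forall fun x => ?_)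
    simpa using abs_fspline_zero_le s x
  | succ k ih => exact (intervalIntegral.continuous_primitive ih (-1)).intervalIntegrable _ _

lemma continuous_fspline_succ (s k : ℕ) : Continuous (fspline s (k + 1)) :=
  intervalIntegral.continuous_primitive (intervalIntegrable_fspline s k) (-1)

lemma fspline_succ_neg_one (s k : ℕ) : fspline s (k + 1) (-1) = 0 :=
  intervalIntegral.integral_same

lemma intervalIntegrable_ofReal_mul {f : ℝ → ℝ} {a b : ℝ} (hf : IntervalIntegrable f volume a b)
    {φ : ℝ → ℂ} (hφ : Continuous φ) :
    IntervalIntegrable (fun x => (f x : ℂ) * φ x) volume a b :=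
  IntervalIntegrable.mul_continuousOn ⟨hf.1.ofReal, hf.2.ofReal⟩ hφ.continuousOn

lemma integral_primitive_mul_deriv_real {f : ℝ → ℝ} {a b : ℝ}
    (hf : IntervalIntegrable f volume a b) {Φ Φ' : ℝ → ℝ}
    (hΦ : ∀ x, HasDerivAt Φ (Φ' x) x) (hΦ' : Continuous Φ') :
    ∫ x in a..b, (∫ t in a..x, f t) * Φ' x =
      (∫ t in a..b, f t) * Φ b - ∫ x in a..b, f x * Φ x := by
  have hderiv : deriv Φ = Φ' := funext fun x => (hΦ x).deriv
  have hΦC1 : ContDiff ℝ 1 Φ :=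
    contDiff_one_iff_deriv.2 ⟨fun x => (hΦ x).differentiableAt, hderiv ▸ hΦ'⟩
  have hparts := (hf.absolutelyContinuousOnInterval_intervalIntegral
    left_mem_uIcc).integral_mul_deriv_eq_deriv_mul
      hΦC1.contDiffOn.absolutelyContinuousOnInterval
  rw [hderiv, intervalIntegral.integral_same, zero_mul, sub_zero] at hparts
  rw [hparts]
  congr 1
  refine intervalIntegral.integral_congr_ae ?_
  filter_upwards [hf.ae_hasDerivAt_integral] with x hx hxm
  rw [(hx (uIoc_subset_uIcc hxm) a left_mem_uIcc).deriv]

lemma integral_primitive_mul_deriv {f : ℝ → ℝ} {a b : ℝ}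
    (hf : ∀ c d, IntervalIntegrable f volume c d) {Φ Φ' : ℝ → ℂ}
    (hΦ : ∀ x, HasDerivAt Φ (Φ' x) x) (hΦ' : Continuous Φ') :
    ∫ x in a..b, ((∫ t in a..x, f t : ℝ) : ℂ) * Φ' x =
      (∫ t in a..b, f t : ℝ) * Φ b - ∫ x in a..b, (f x : ℂ) * Φ x := by
  have hΦc : Continuous Φ := continuous_iff_continuousAt.2 fun x => (hΦ x).continuousAt
  have hprim := (intervalIntegral.continuous_primitive hf a).intervalIntegrable (μ := volume) a b
  have hcomp (L : ℂ →L[ℝ] ℝ) :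
      L (∫ x in a..b, ((∫ t in a..x, f t : ℝ) : ℂ) * Φ' x) =
        L ((∫ t in a..b, f t : ℝ) * Φ b - ∫ x in a..b, (f x : ℂ) * Φ x) := by
    have hsmul (r : ℝ) (w : ℂ) : L (r * w) = r * L w := by
      rw [← Complex.real_smul, map_smul, smul_eq_mul]
    rw [map_sub, ← L.intervalIntegral_comp_comm (intervalIntegrable_ofReal_mul hprim hΦ'),
      ← L.intervalIntegral_comp_comm (intervalIntegrable_ofReal_mul (hf a b) hΦc)]
    simp only [hsmul]
    exact integral_primitive_mul_deriv_real (hf a b)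
      (fun x => L.hasFDerivAt.comp_hasDerivAt x (hΦ x)) (L.continuous.comp hΦ')
  exact Complex.ext (hcomp Complex.reCLM) (hcomp Complex.imCLM)

/-- The pairing `∫₋₁¹ f_k φ` of a member of the spline chain with a test function. -/
noncomputable def splinePairing (s k : ℕ) (φ : ℝ → ℂ) : ℂ :=
  ∫ x in (-1 : ℝ)..1, (fspline s k x : ℂ) * φ x

lemma splinePairing_add (s k : ℕ) {φ ψ : ℝ → ℂ} (hφ : Continuous φ) (hψ : Continuous ψ) :
    splinePairing s k (fun x => φ x + ψ x) = splinePairing s k φ + splinePairing s k ψ := by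
  have hf := intervalIntegrable_fspline s k (-1) 1
  rw [splinePairing, splinePairing, splinePairing, ← intervalIntegral.integral_add
    (intervalIntegrable_ofReal_mul hf hφ) (intervalIntegrable_ofReal_mul hf hψ)]
  simp only [mul_add]

lemma splinePairing_const_mul (s k : ℕ) (c : ℂ) (φ : ℝ → ℂ) :
    splinePairing s k (fun x => c * φ x) = c * splinePairing s k φ := by
  rw [splinePairing, splinePairing, ← intervalIntegral.integral_const_mul]
  simp only [mul_left_comm]

lemma splinePairing_one (s k : ℕ) : splinePairing s k (fun _ => 1) = fspline s (k + 1) 1 := by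
  simp only [splinePairing, mul_one, fspline_succ_apply, intervalIntegral.integral_ofReal]

lemma splinePairing_succ_deriv {s k : ℕ} (hk : fspline s (k + 1) 1 = 0) {Φ Φ' : ℝ → ℂ}
    (hΦ : ∀ x, HasDerivAt Φ (Φ' x) x) (hΦ' : Continuous Φ') :
    splinePairing s (k + 1) Φ' = -splinePairing s k Φ := by
  rw [fspline_succ_apply] at hk
  simp only [splinePairing, fspline_succ_apply,
    integral_primitive_mul_deriv (intervalIntegrable_fspline s k) hΦ hΦ', hk, Complex.ofReal_zero,
    zero_mul, zero_sub]

lemma integral_fspline_zero_mul {s j : ℕ} (hj : j < s) {y : ℝ}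
    (hy : y ∈ Icc (node s (j + 1)) (node s j)) (φ : ℝ → ℂ) :
    ∫ x in y..node s j, (fspline s 0 x : ℂ) * φ x =
      (-1) ^ (s - 1 + j) * ∫ x in y..node s j, φ x := by
  rw [← intervalIntegral.integral_const_mul]
  refine intervalIntegral.integral_congr_ae ?_
  filter_upwards [Measure.ae_ne volume (node s j)] with x hx hxm
  rw [uIoc_of_le hy.2] at hxm
  rw [fspline_zero_of_mem_Ioo_node hj ⟨hy.1.trans_lt hxm.1, lt_of_le_of_ne hxm.2 hx⟩]
  push_cast
  rfl

lemma splinePairing_zero_deriv {s : ℕ} (hs : s ≠ 0) {Φ Φ' : ℝ → ℂ}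
    (hΦ : ∀ x, HasDerivAt Φ (Φ' x) x) (hΦ' : Continuous Φ') :
    splinePairing s 0 Φ' = (-1) ^ (s - 1) * alternatingNodeSum s Φ := by
  rw [splinePairing, alternatingNodeSum, intervalIntegral.integral_symm, ← node_eq_neg_one hs,
    ← node_eq_one (n := s), ← intervalIntegral.sum_integral_adjacent_intervals fun _ _ =>
      intervalIntegrable_ofReal_mul (intervalIntegrable_fspline s 0 _ _) hΦ',
    ← Finset.sum_neg_distrib, Finset.mul_sum]
  refine Finset.sum_congr rfl fun j hj => ?_
  rw [Finset.mem_range] at hj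
  rw [← intervalIntegral.integral_symm,
    integral_fspline_zero_mul hj ⟨le_rfl, (node_lt hj j.lt_succ_self).le⟩,
    intervalIntegral.integral_eq_sub_of_hasDerivAt (fun x _ => hΦ x)
      (hΦ'.intervalIntegrable _ _), pow_add, mul_assoc]

lemma hasDerivAt_ofReal_pow_div (n : ℕ) (x : ℝ) :
    HasDerivAt (fun x : ℝ => (1 / (n + 1) : ℂ) * (x : ℂ) ^ (n + 1)) ((x : ℂ) ^ n) x := by
  have hn : (n + 1 : ℂ) ≠ 0 := by exact_mod_cast n.succ_ne_zero
  convert! ((Complex.ofRealCLM.hasDerivAt (x := x)).pow (n + 1)).const_mul (1 / (n + 1) : ℂ) using 1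
  simp only [Complex.ofRealCLM_apply, Nat.cast_add, Nat.cast_one, Nat.add_sub_cancel]
  simp
  field

lemma splinePairing_zero_pow {s : ℕ} (hs : s ≠ 0) (n : ℕ) :
    splinePairing s 0 (fun x => (x : ℂ) ^ n) =
      (-1) ^ (s - 1) * (1 / (n + 1) * alternatingNodeSum s (fun x => (x : ℂ) ^ (n + 1))) := by
  rw [splinePairing_zero_deriv hs (hasDerivAt_ofReal_pow_div n) (by fun_prop),
    alternatingNodeSum_const_mul]

lemma splinePairing_succ_pow {s k : ℕ} (hk : fspline s (k + 1) 1 = 0) (n : ℕ) :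
    splinePairing s (k + 1) (fun x => (x : ℂ) ^ n) =
      -(1 / (n + 1) * splinePairing s k (fun x => (x : ℂ) ^ (n + 1))) := by
  rw [splinePairing_succ_deriv hk (hasDerivAt_ofReal_pow_div n) (by fun_prop),
    splinePairing_const_mul]

lemma fspline_succ_one_eq_zero_iff (s k : ℕ) :
    fspline s (k + 1) 1 = 0 ↔ splinePairing s k (fun x => (x : ℂ) ^ 0) = 0 := by
  simp only [pow_zero, splinePairing_one, Complex.ofReal_eq_zero]

lemma splinePairing_pow_eq_zero {s k n : ℕ} (h : n + k + 2 ≤ s) :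
    splinePairing s k (fun x => (x : ℂ) ^ n) = 0 := by
  induction k generalizing n with
  | zero =>
    rw [splinePairing_zero_pow (by omega), alternatingNodeSum_pow_of_lt (by omega), mul_zero,
      mul_zero]
  | succ k ih =>
    have hk := (fspline_succ_one_eq_zero_iff s k).2 (ih (by omega))
    rw [splinePairing_succ_pow hk, ih (by omega), mul_zero, neg_zero]

lemma fspline_succ_one {s k : ℕ} (h : k + 2 ≤ s) : fspline s (k + 1) 1 = 0 :=
  (fspline_succ_one_eq_zero_iff s k).2 (splinePairing_pow_eq_zero (by omega))

lemma splinePairing_pow_mul_factorial {s k : ℕ} (h : k + 1 ≤ s) (n : ℕ) :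
    splinePairing s k (fun x => (x : ℂ) ^ n) * (n + k + 1).factorial =
      (-1) ^ (s - 1 + k) * n.factorial *
        alternatingNodeSum s (fun x => (x : ℂ) ^ (n + k + 1)) := by
  have hn (n : ℕ) : (n + 1 : ℂ) ≠ 0 := by exact_mod_cast n.succ_ne_zero
  induction k generalizing n with
  | zero =>
    rw [splinePairing_zero_pow (by omega), add_zero, Nat.factorial_succ]
    have := hn n
    push_cast
    field
  | succ k ih =>
    have hprev := ih (by omega) (n + 1)
    rw [show n + 1 + k + 1 = n + (k + 1) + 1 by ring, Nat.factorial_succ n] at hprev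
    rw [splinePairing_succ_pow (fspline_succ_one (by omega)), ← add_assoc (s - 1), pow_succ]
    have := hn n
    push_cast at hprev ⊢
    field_simp
    linear_combination -hprev

/-- The total mass `2^(2-s)/(s-1)!` of the perfect B-spline. -/
noncomputable def splineMass (s : ℕ) : ℝ := 4 * s / (2 ^ s * s.factorial)

lemma splineMass_pos {s : ℕ} (hs : s ≠ 0) : 0 < splineMass s := by
  unfold splineMass; positivity

lemma splinePairing_pred_pow_mul_factorial {s : ℕ} (hs : s ≠ 0) (n : ℕ) :
    splinePairing s (s - 1) (fun x => (x : ℂ) ^ n) * (s + n).factorial =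
      n.factorial * alternatingNodeSum s (fun x => (x : ℂ) ^ (s + n)) := by
  have h := splinePairing_pow_mul_factorial (s := s) (k := s - 1) (by omega) n
  rwa [show n + (s - 1) + 1 = s + n by omega, (Even.add_self _).neg_one_pow, one_mul] at h

lemma splinePairing_pred_one {s : ℕ} (hs : s ≠ 0) :
    splinePairing s (s - 1) (fun _ => 1) = splineMass s := by
  have h := splinePairing_pred_pow_mul_factorial hs 0
  simp only [pow_zero, add_zero, alternatingNodeSum_pow_self hs] at h
  rw [eq_div_of_mul_eq (by exact_mod_cast s.factorial_ne_zero) h, splineMass]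
  push_cast
  field_simp
  simp

lemma splinePairing_pred_sq {s : ℕ} (hs : 2 ≤ s) :
    splinePairing s (s - 1) (fun x => (x : ℂ) ^ 2) = splineMass s / (2 * (s + 1)) := by
  have h := splinePairing_pred_pow_mul_factorial (show s ≠ 0 by omega) 2
  rw [alternatingNodeSum_pow_add_two hs] at h
  have hs1 : (s + 1 : ℂ) ≠ 0 := by exact_mod_cast s.succ_ne_zero
  have hs2 : (s + 1 + 1 : ℂ) ≠ 0 := by exact_mod_cast (s + 1).succ_ne_zero
  have hfac : (s.factorial : ℂ) ≠ 0 := by exact_mod_cast s.factorial_ne_zero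
  rw [eq_div_of_mul_eq (by exact_mod_cast (s + 2).factorial_ne_zero) h, splineMass,
    Nat.factorial_succ (s + 1), Nat.factorial_succ s, Nat.factorial_two]
  push_cast
  field_simp
  ring

/-! ### Decay of the Fourier transform of the spline -/

lemma fspline_one_of_mem_Icc_node {s j : ℕ} (hj : j < s) {y : ℝ}
    (hy : y ∈ Icc (node s (j + 1)) (node s j)) :
    fspline s 1 y = fspline s 1 (node s j) - (-1) ^ (s - 1 + j) * (node s j - y) := by
  have hpiece := integral_fspline_zero_mul hj hy (fun _ => 1)
  simp only [mul_one, intervalIntegral.integral_ofReal, intervalIntegral.integral_const,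
    Complex.real_smul] at hpiece
  have hpiece' : ∫ x in y..node s j, fspline s 0 x = (-1) ^ (s - 1 + j) * (node s j - y) := by
    exact_mod_cast hpiece
  rw [fspline_succ_apply, fspline_succ_apply, ← hpiece', eq_sub_iff_add_eq,
    intervalIntegral.integral_add_adjacent_intervals (intervalIntegrable_fspline _ _ _ _)
      (intervalIntegrable_fspline _ _ _ _)]

lemma fspline_one_node {s j : ℕ} (hs : 2 ≤ s) (hj : j ≤ s) :
    fspline s 1 (node s j) =
      (-1) ^ (s - 1 + j) * (Real.tan (π / (2 * s)) * Real.sin (j * π / s)) := by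
  induction j with
  | zero => rw [node_eq_one, fspline_succ_one hs]; simp
  | succ j ih =>
    rw [fspline_one_of_mem_Icc_node hj ⟨le_rfl, (node_lt hj j.lt_succ_self).le⟩, ih (by omega)]
    have hs' : (2 : ℝ) ≤ s := by exact_mod_cast hs
    set α := π / (2 * s) with hα
    have hcos : Real.cos α ≠ 0 := by
      have hα0 : 0 < α := by positivity
      refine (Real.cos_pos_of_mem_Ioo ⟨by linarith [Real.pi_pos], ?_⟩).ne'
      exact div_lt_div_of_pos_left Real.pi_pos two_pos (by linarith)
    have hright : ((j + 1 : ℕ) : ℝ) * π / s = (2 * j + 1) * α + α := by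
      rw [hα]; push_cast; field
    have hleft : (j : ℝ) * π / s = (2 * j + 1) * α - α := by rw [hα]; field
    rw [node, node, hright, hleft, Real.tan_eq_sin_div_cos, Real.cos_add, Real.cos_sub,
      Real.sin_add, Real.sin_sub, ← add_assoc, pow_succ]
    field

lemma abs_fspline_one_le {s : ℕ} (hs : 2 ≤ s) {y : ℝ} (hy : y ∈ Icc (-1 : ℝ) 1) :
    |fspline s 1 y| ≤ Real.tan (π / (2 * s)) := by
  have hs' : (2 : ℝ) ≤ s := by exact_mod_cast hs
  have htan : 0 ≤ Real.tan (π / (2 * s)) := by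
    refine Real.tan_nonneg_of_nonneg_of_le_pi_div_two (by positivity) ?_
    gcongr
    linarith
  have hnode : ∀ j ≤ s, |fspline s 1 (node s j)| ≤ Real.tan (π / (2 * s)) := fun j hj => by
    rw [fspline_one_node hs hj, abs_mul, abs_pow, abs_neg, abs_one, one_pow, one_mul, abs_mul,
      abs_of_nonneg htan]
    exact mul_le_of_le_one_right htan (Real.abs_sin_le_one _)
  have hpieces : ∀ j ≤ s, ∀ y ∈ Icc (node s j) 1, |fspline s 1 y| ≤ Real.tan (π / (2 * s)) := by
    intro j hj y hy
    induction j with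
    | zero =>
      rw [node_eq_one] at hy
      rwa [le_antisymm hy.2 hy.1, fspline_succ_one hs, abs_zero]
    | succ j ih =>
      rcases le_total (node s j) y with h | h
      · exact ih (by omega) ⟨h, hy.2⟩
      · have hleft := fspline_one_of_mem_Icc_node hj ⟨le_rfl, (node_lt hj j.lt_succ_self).le⟩
        have hmid := fspline_one_of_mem_Icc_node hj ⟨hy.1, h⟩
        have hboundr := abs_le.1 (hnode j (by omega))
        have hboundl := abs_le.1 (hnode (j + 1) hj)
        rw [abs_le]
        rcases neg_one_pow_eq_or ℝ (s - 1 + j) with hsign | hsign <;>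
          rw [hsign] at hleft hmid <;> constructor <;> linarith [hy.1]
  exact hpieces s le_rfl y (by rwa [node_eq_neg_one (by omega)])

/-- The test function `x ↦ x^l e^{iξx}`. -/
noncomputable def expMonomial (l : ℕ) (ξ : ℝ) (x : ℝ) : ℂ :=
  (x : ℂ) ^ l * Complex.exp (Complex.I * ξ * x)

lemma continuous_expMonomial (l : ℕ) (ξ : ℝ) : Continuous (expMonomial l ξ) := by
  unfold expMonomial; fun_prop

lemma norm_expMonomial_le (l : ℕ) (ξ : ℝ) {x : ℝ} (hx : x ∈ Icc (-1 : ℝ) 1) :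
    ‖expMonomial l ξ x‖ ≤ 1 := by
  rw [expMonomial, norm_mul, norm_pow, Complex.norm_real, Real.norm_eq_abs,
    show Complex.I * ξ * x = ((ξ * x : ℝ) : ℂ) * Complex.I by push_cast; ring,
    Complex.norm_exp_ofReal_mul_I, mul_one]
  exact pow_le_one₀ (abs_nonneg x) (abs_le.2 hx)

lemma hasDerivAt_expMonomial (l : ℕ) (ξ x : ℝ) :
    HasDerivAt (expMonomial l ξ)
      (Complex.I * ξ * expMonomial l ξ x + l * expMonomial (l - 1) ξ x) x := by
  have hpow := (Complex.ofRealCLM.hasDerivAt (x := x)).pow l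
  have hexp := ((Complex.ofRealCLM.hasDerivAt (x := x)).const_mul (Complex.I * ξ)).cexp
  convert! hpow.mul hexp using 1
  simp only [expMonomial, Complex.ofRealCLM_apply, Complex.ofReal_one, Pi.pow_apply]
  ring

lemma splinePairing_deriv_expMonomial (s k l : ℕ) (ξ : ℝ) :
    splinePairing s k (fun x => Complex.I * ξ * expMonomial l ξ x + l * expMonomial (l - 1) ξ x) =
      Complex.I * ξ * splinePairing s k (expMonomial l ξ) +
        l * splinePairing s k (expMonomial (l - 1) ξ) := by
  have hleft : Continuous fun x => Complex.I * ξ * expMonomial l ξ x :=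
    continuous_const.mul (continuous_expMonomial l ξ)
  have hright : Continuous fun x => (l : ℂ) * expMonomial (l - 1) ξ x :=
    continuous_const.mul (continuous_expMonomial (l - 1) ξ)
  rw [splinePairing_add _ _ hleft hright, splinePairing_const_mul, splinePairing_const_mul]

lemma continuous_deriv_expMonomial (l : ℕ) (ξ : ℝ) :
    Continuous fun x => Complex.I * ξ * expMonomial l ξ x + l * expMonomial (l - 1) ξ x :=
  (continuous_const.mul (continuous_expMonomial l ξ)).add
    (continuous_const.mul (continuous_expMonomial (l - 1) ξ))

lemma abs_mul_norm_le_of_I_mul_add_eq {ξ : ℝ} {l : ℕ} {u v w : ℂ}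
    (h : Complex.I * ξ * u + l * v = w) : |ξ| * ‖u‖ ≤ ‖w‖ + l * ‖v‖ := by
  have hu := norm_sub_le w (l * v)
  rwa [← h, add_sub_cancel_right, norm_mul, norm_mul, norm_mul, Complex.norm_I, one_mul,
    Complex.norm_real, Real.norm_eq_abs, Complex.norm_natCast, h] at hu

lemma abs_mul_norm_splinePairing_succ_le {s k : ℕ} (hk : k + 2 ≤ s) (l : ℕ) (ξ : ℝ) :
    |ξ| * ‖splinePairing s (k + 1) (expMonomial l ξ)‖ ≤
      ‖splinePairing s k (expMonomial l ξ)‖ +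
        l * ‖splinePairing s (k + 1) (expMonomial (l - 1) ξ)‖ := by
  have hparts := splinePairing_succ_deriv (fspline_succ_one hk) (hasDerivAt_expMonomial l ξ)
    (continuous_deriv_expMonomial l ξ)
  rw [splinePairing_deriv_expMonomial] at hparts
  simpa only [norm_neg] using abs_mul_norm_le_of_I_mul_add_eq hparts

lemma abs_mul_norm_splinePairing_zero_le {s : ℕ} (hs : s ≠ 0) (l : ℕ) (ξ : ℝ) :
    |ξ| * ‖splinePairing s 0 (expMonomial l ξ)‖ ≤
      2 * s + l * ‖splinePairing s 0 (expMonomial (l - 1) ξ)‖ := by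
  have hparts := splinePairing_zero_deriv hs (hasDerivAt_expMonomial l ξ)
    (continuous_deriv_expMonomial l ξ)
  rw [splinePairing_deriv_expMonomial] at hparts
  refine (abs_mul_norm_le_of_I_mul_add_eq hparts).trans (add_le_add_left ?_ _)
  rw [norm_mul, norm_pow, norm_neg, norm_one, one_pow, one_mul, ← mul_one (2 * (s : ℝ))]
  exact norm_alternatingNodeSum_le s fun x hx => norm_expMonomial_le l ξ hx

lemma norm_splinePairing_expMonomial_le {s k : ℕ} {B : ℝ}
    (hB : ∀ x ∈ Icc (-1 : ℝ) 1, |fspline s k x| ≤ B) (l : ℕ) (ξ : ℝ) :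
    ‖splinePairing s k (expMonomial l ξ)‖ ≤ 2 * B := by
  have hB0 : 0 ≤ B := (abs_nonneg _).trans (hB 0 (by norm_num))
  have hint := intervalIntegral.norm_integral_le_of_norm_le_const (a := -1) (b := 1) (C := B)
    (f := fun x => (fspline s k x : ℂ) * expMonomial l ξ x) fun x hx => by
      have hx' : x ∈ Icc (-1 : ℝ) 1 := Ioc_subset_Icc_self (by rwa [uIoc_of_le (by norm_num)] at hx)
      rw [norm_mul, Complex.norm_real, Real.norm_eq_abs]
      exact (mul_le_mul (hB x hx') (norm_expMonomial_le l ξ hx') (norm_nonneg _) hB0).trans_eq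
        (mul_one B)
  norm_num at hint
  rwa [splinePairing, mul_comm]

lemma norm_splinePairing_zero_le (s l : ℕ) (ξ : ℝ) :
    ‖splinePairing s 0 (expMonomial l ξ)‖ ≤ 2 := by
  simpa using norm_splinePairing_expMonomial_le (fun x _ => abs_fspline_zero_le s x) l ξ

lemma pow_mul_norm_splinePairing_add_le {s j k : ℕ} (h : j + k + 1 ≤ s) (ξ : ℝ) :
    |ξ| ^ k * ‖splinePairing s (j + k) (expMonomial 0 ξ)‖ ≤
      ‖splinePairing s j (expMonomial 0 ξ)‖ := by
  induction k with
  | zero => simp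
  | succ k ih =>
    have hstep := abs_mul_norm_splinePairing_succ_le (s := s) (k := j + k) (by omega) 0 ξ
    rw [Nat.cast_zero, zero_mul, add_zero] at hstep
    rw [pow_succ, mul_assoc]
    exact (mul_le_mul_of_nonneg_left hstep (by positivity)).trans (ih (by omega))

lemma pow_mul_norm_splinePairing_expMonomial_one_le {s k : ℕ} (hk : k + 1 ≤ s) (ξ : ℝ) :
    |ξ| ^ k * ‖splinePairing s k (expMonomial 1 ξ)‖ ≤
      2 + k * ‖splinePairing s 1 (expMonomial 0 ξ)‖ := by
  induction k with
  | zero => simpa using norm_splinePairing_zero_le s 1 ξ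
  | succ k ih =>
    have hstep := abs_mul_norm_splinePairing_succ_le hk 1 ξ
    have hzero := pow_mul_norm_splinePairing_add_le (s := s) (j := 1) (k := k) (by omega) ξ
    rw [Nat.cast_one, one_mul, Nat.sub_self] at hstep
    rw [add_comm 1 k] at hzero
    calc |ξ| ^ (k + 1) * ‖splinePairing s (k + 1) (expMonomial 1 ξ)‖
        = |ξ| ^ k * (|ξ| * ‖splinePairing s (k + 1) (expMonomial 1 ξ)‖) := by ring
      _ ≤ |ξ| ^ k * (‖splinePairing s k (expMonomial 1 ξ)‖ +
            ‖splinePairing s (k + 1) (expMonomial 0 ξ)‖) := by gcongr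
      _ ≤ (2 + k * ‖splinePairing s 1 (expMonomial 0 ξ)‖) +
            ‖splinePairing s 1 (expMonomial 0 ξ)‖ := by
          rw [mul_add]; exact add_le_add (ih (by omega)) hzero
      _ = _ := by push_cast; ring

lemma pow_succ_mul_norm_splinePairing_expMonomial_zero_le {s k : ℕ} (hk : k + 1 ≤ s) (ξ : ℝ) :
    |ξ| ^ (k + 1) * ‖splinePairing s k (expMonomial 0 ξ)‖ ≤ 2 * s := by
  have hiter := pow_mul_norm_splinePairing_add_le (s := s) (j := 0) (k := k) (by omega) ξ
  rw [zero_add] at hiter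
  rw [pow_succ', mul_assoc]
  refine (mul_le_mul_of_nonneg_left hiter (abs_nonneg ξ)).trans ?_
  simpa using abs_mul_norm_splinePairing_zero_le (s := s) (by omega) 0 ξ

lemma pow_succ_mul_norm_splinePairing_expMonomial_one_le {s k : ℕ} (hk : k + 1 ≤ s) (ξ : ℝ) :
    |ξ| ^ (k + 1) * ‖splinePairing s k (expMonomial 1 ξ)‖ ≤ 2 * s + 2 * (k + 1) := by
  induction k with
  | zero =>
    have hstep := abs_mul_norm_splinePairing_zero_le (s := s) (by omega) 1 ξ
    rw [Nat.cast_one, one_mul] at hstep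
    simpa using hstep.trans (add_le_add_right (norm_splinePairing_zero_le s 0 ξ) _)
  | succ k ih =>
    have hstep := abs_mul_norm_splinePairing_succ_le hk 1 ξ
    have hzero := pow_mul_norm_splinePairing_add_le (s := s) (j := 0) (k := k + 1) (by omega) ξ
    rw [Nat.cast_one, one_mul, Nat.sub_self] at hstep
    rw [zero_add] at hzero
    calc |ξ| ^ (k + 1 + 1) * ‖splinePairing s (k + 1) (expMonomial 1 ξ)‖
        = |ξ| ^ (k + 1) * (|ξ| * ‖splinePairing s (k + 1) (expMonomial 1 ξ)‖) := by ring
      _ ≤ |ξ| ^ (k + 1) * (‖splinePairing s k (expMonomial 1 ξ)‖ +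
            ‖splinePairing s (k + 1) (expMonomial 0 ξ)‖) := by gcongr
      _ ≤ (2 * s + 2 * (k + 1)) + 2 := by
          rw [mul_add]
          exact add_le_add (ih (by omega)) (hzero.trans (norm_splinePairing_zero_le s 0 ξ))
      _ = _ := by push_cast; ring

lemma pow_succ_mul_norm_splinePairing_expMonomial_two_le {s k : ℕ} (hk : k + 1 ≤ s) (ξ : ℝ) :
    |ξ| ^ (k + 1) * ‖splinePairing s k (expMonomial 2 ξ)‖ ≤
      2 * s + 4 * (k + 1) + k * (k + 1) * ‖splinePairing s 1 (expMonomial 0 ξ)‖ := by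
  induction k with
  | zero =>
    have hstep := abs_mul_norm_splinePairing_zero_le (s := s) (by omega) 2 ξ
    norm_num at hstep ⊢
    linarith [norm_splinePairing_zero_le s 1 ξ]
  | succ k ih =>
    have hstep := abs_mul_norm_splinePairing_succ_le hk 2 ξ
    have hone := pow_mul_norm_splinePairing_expMonomial_one_le hk ξ
    calc |ξ| ^ (k + 1 + 1) * ‖splinePairing s (k + 1) (expMonomial 2 ξ)‖
        = |ξ| ^ (k + 1) * (|ξ| * ‖splinePairing s (k + 1) (expMonomial 2 ξ)‖) := by ring
      _ ≤ |ξ| ^ (k + 1) * (‖splinePairing s k (expMonomial 2 ξ)‖ +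
            2 * ‖splinePairing s (k + 1) (expMonomial 1 ξ)‖) := by gcongr; exact hstep
      _ = |ξ| ^ (k + 1) * ‖splinePairing s k (expMonomial 2 ξ)‖ +
            2 * (|ξ| ^ (k + 1) * ‖splinePairing s (k + 1) (expMonomial 1 ξ)‖) := by ring
      _ ≤ (2 * s + 4 * (k + 1) + k * (k + 1) * ‖splinePairing s 1 (expMonomial 0 ξ)‖) +
            2 * (2 + (k + 1 : ℕ) * ‖splinePairing s 1 (expMonomial 0 ξ)‖) := by
          gcongr; exact ih (by omega)
      _ = _ := by push_cast; ring

lemma tan_pi_div_le {s : ℕ} (hs : 3 ≤ s) : s * Real.tan (π / (2 * s)) ≤ 2 := by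
  have hs' : (3 : ℝ) ≤ s := by exact_mod_cast hs
  have hpos : 0 < π / (2 * s) := by positivity
  have hle : π / (2 * s) ≤ 0.53 := by
    rw [div_le_iff₀ (by positivity)]
    linarith [Real.pi_lt_d2]
  have hcos : 0.85 ≤ Real.cos (π / (2 * s)) := by
    nlinarith [Real.one_sub_sq_div_two_le_cos (x := π / (2 * s))]
  have hsin : s * Real.sin (π / (2 * s)) ≤ π / 2 := by
    calc s * Real.sin (π / (2 * s)) ≤ s * (π / (2 * s)) := by gcongr; exact Real.sin_le hpos.le
      _ = π / 2 := by field
  rw [Real.tan_eq_sin_div_cos, mul_div_assoc', div_le_iff₀ (by linarith)]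
  linarith [Real.pi_lt_d2]
/-- Decay constants of the Fourier transform of `x^l g_{s-1}`. -/
def decayConst : ℕ → ℝ
  | 0 => 1
  | 1 => 2
  | _ => 5

lemma decayConst_nonneg (l : ℕ) : 0 ≤ decayConst l := by
  unfold decayConst; split <;> norm_num

lemma abs_pow_mul_norm_splinePairing_le {s : ℕ} (hs : 3 ≤ s) {l : ℕ} (hl : l ≤ 2) (ξ : ℝ) :
    |ξ| ^ s * ‖splinePairing s (s - 1) (expMonomial l ξ)‖ ≤ 2 * s * decayConst l := by
  obtain ⟨k, rfl⟩ : ∃ k, s = k + 1 := ⟨s - 1, by omega⟩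
  rw [Nat.add_sub_cancel]
  interval_cases l
  · simpa [decayConst] using pow_succ_mul_norm_splinePairing_expMonomial_zero_le le_rfl ξ
  · refine (pow_succ_mul_norm_splinePairing_expMonomial_one_le le_rfl ξ).trans_eq ?_
    simp only [decayConst]; push_cast; ring
  · have hfirst := norm_splinePairing_expMonomial_le
      (fun x hx => abs_fspline_one_le (s := k + 1) (by omega) hx) 0 ξ
    have hbound : (k + 1) * ‖splinePairing (k + 1) 1 (expMonomial 0 ξ)‖ ≤ 4 := by
      have htan := tan_pi_div_le hs
      push_cast at htan hfirst
      calc (k + 1) * ‖splinePairing (k + 1) 1 (expMonomial 0 ξ)‖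
          ≤ (k + 1) * (2 * Real.tan (π / (2 * (k + 1)))) := by gcongr
        _ ≤ 4 := by linarith
    calc |ξ| ^ (k + 1) * ‖splinePairing (k + 1) k (expMonomial 2 ξ)‖
        ≤ 2 * (k + 1 : ℕ) + 4 * (k + 1) +
            k * ((k + 1) * ‖splinePairing (k + 1) 1 (expMonomial 0 ξ)‖) :=
          (pow_succ_mul_norm_splinePairing_expMonomial_two_le le_rfl ξ).trans_eq (by ring)
      _ ≤ 2 * (k + 1 : ℕ) + 4 * (k + 1) + k * 4 := by gcongr
      _ ≤ _ := by simp only [decayConst]; push_cast; linarith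

lemma norm_splinePairing_pred_expMonomial_le {s : ℕ} (hs : 3 ≤ s) {l : ℕ} (hl : l ≤ 2)
    {ξ r η : ℝ} (hr : 0 < r) (hη : 0 < η) (h : r * η ≤ |ξ|) :
    ‖splinePairing s (s - 1) (expMonomial l ξ)‖ ≤
      2 * s * decayConst l / η ^ s * (1 / r ^ s) := by
  rw [div_mul_div_comm, mul_one, mul_comm (η ^ s), ← mul_pow, le_div_iff₀' (by positivity)]
  refine le_trans ?_ (abs_pow_mul_norm_splinePairing_le hs hl ξ)
  gcongr

/-! ### Poisson summation and localisation of the kernel -/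

lemma hasSum_zetaNat {m : ℕ} (hm : 2 ≤ m) :
    HasSum (fun n : ℕ => (1 : ℝ) / ((n : ℝ) + 1) ^ m) (zetaNat m) := by
  have hsum := (summable_nat_add_iff 1).2 (Real.summable_one_div_nat_pow.2 (show 1 < m from hm))
  push_cast at hsum
  exact hsum.hasSum

lemma zetaNat_two_le : zetaNat 2 ≤ 2 := by
  have hsum := (hasSum_nat_add_iff' 1).2 hasSum_zeta_two
  push_cast at hsum
  have heq := (hasSum_zetaNat le_rfl).unique hsum
  norm_num at heq
  nlinarith [Real.pi_lt_d2, Real.pi_pos]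

lemma summable_int_and_norm_tsum_sub_le {E : Type*} [NormedAddCommGroup E] [CompleteSpace E]
    {F : ℤ → E} {w : ℕ → ℝ} {W : ℝ} (hw : HasSum w W) (hpos : ∀ n : ℕ, ‖F (n + 1)‖ ≤ w n)
    (hneg : ∀ n : ℕ, ‖F (-(n + 1))‖ ≤ w n) : Summable F ∧ ‖∑' m, F m - F 0‖ ≤ 2 * W := by
  have hspos : Summable fun n : ℕ => F (n + 1) := .of_norm_bounded hw.summable hpos
  have hsneg : Summable fun n : ℕ => F (-(n + 1)) := .of_norm_bounded hw.summable hneg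
  refine ⟨.of_add_one_of_neg_add_one hspos hsneg, ?_⟩
  calc ‖∑' m, F m - F 0‖ = ‖∑' n : ℕ, F (n + 1) + ∑' n : ℕ, F (-(n + 1))‖ := by
        rw [tsum_of_add_one_of_neg_add_one hspos hsneg]; congr 1; abel
    _ ≤ ‖∑' n : ℕ, F (n + 1)‖ + ‖∑' n : ℕ, F (-(n + 1))‖ := norm_add_le _ _
    _ ≤ 2 * W := by linarith [tsum_of_norm_bounded hw hpos, tsum_of_norm_bounded hw hneg]

lemma summable_int_and_norm_tsum_le {E : Type*} [NormedAddCommGroup E] [CompleteSpace E]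
    {F : ℤ → E} {w : ℕ → ℝ} {W : ℝ} (hw : HasSum w W) (hpos : ∀ n : ℕ, ‖F (n + 1)‖ ≤ w n)
    (hneg : ∀ n : ℕ, ‖F (-n)‖ ≤ w n) : Summable F ∧ ‖∑' m, F m‖ ≤ 2 * W := by
  have hshift (n : ℕ) : (-(n + 1) + 1 : ℤ) = -n := by ring
  have hspos : Summable fun n : ℕ => F (n + 1) := .of_norm_bounded hw.summable hpos
  have hsneg : Summable fun n : ℕ => F (-(n + 1) + 1) := by
    simpa only [hshift] using Summable.of_norm_bounded hw.summable hneg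
  have hsum := Summable.of_nat_of_neg_add_one (f := fun m => F (m + 1)) hspos hsneg
  refine ⟨(Equiv.addRight (1 : ℤ)).summable_iff.1 hsum, ?_⟩
  calc ‖∑' m, F m‖ = ‖∑' n : ℕ, F (n + 1) + ∑' n : ℕ, F (-n)‖ := by
        rw [← (Equiv.addRight (1 : ℤ)).tsum_eq, ← funext fun n => congrArg F (hshift n)]
        exact congrArg _ (tsum_of_nat_of_neg_add_one hspos hsneg)
    _ ≤ ‖∑' n : ℕ, F (n + 1)‖ + ‖∑' n : ℕ, F (-n)‖ := norm_add_le _ _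
    _ ≤ 2 * W := by linarith [tsum_of_norm_bounded hw hpos, tsum_of_norm_bounded hw hneg]

/-- The perfect B-spline `g_{s-1}` extended by zero to the real line; since `g_{s-1}` vanishes at
`±1`, this amounts to clamping the argument to `[-1, 1]`. -/
noncomputable def splineExt (s : ℕ) (x : ℝ) : ℝ := fspline s (s - 1) (max (-1) (min 1 x))

lemma splineExt_of_mem (s : ℕ) {x : ℝ} (hx : x ∈ Icc (-1 : ℝ) 1) :
    splineExt s x = fspline s (s - 1) x := by
  rw [splineExt, min_eq_right hx.2, max_eq_right hx.1]

lemma continuous_splineExt {s : ℕ} (hs : 2 ≤ s) : Continuous (splineExt s) := by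
  obtain ⟨k, rfl⟩ := Nat.exists_eq_add_of_le' hs
  exact (continuous_fspline_succ (k + 2) k).comp (by fun_prop)

lemma splineExt_eq_zero {s : ℕ} (hs : 2 ≤ s) {x : ℝ} (hx : 1 ≤ |x|) : splineExt s x = 0 := by
  obtain ⟨k, rfl⟩ := Nat.exists_eq_add_of_le' hs
  rw [splineExt, show k + 2 - 1 = k + 1 by omega]
  rcases le_abs.1 hx with h | h
  · rw [min_eq_left h, max_eq_right (by norm_num), fspline_succ_one le_rfl]
  · rw [min_eq_right (by linarith), max_eq_left (by linarith), fspline_succ_neg_one]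

lemma integral_splineExt_mul {s : ℕ} (hs : 2 ≤ s) (φ : ℝ → ℂ) :
    ∫ x, (splineExt s x : ℂ) * φ x = splinePairing s (s - 1) φ := by
  have hsupp : Function.support (fun x => (splineExt s x : ℂ) * φ x) ⊆ Ioc (-1) 1 := by
    intro x hx
    have habs : |x| < 1 := by
      by_contra! h
      exact hx (by simp only [splineExt_eq_zero hs h, Complex.ofReal_zero, zero_mul])
    exact ⟨(abs_lt.1 habs).1, (abs_lt.1 habs).2.le⟩
  rw [← intervalIntegral.integral_eq_integral_of_support_subset hsupp, splinePairing]
  refine intervalIntegral.integral_congr fun x hx => ?_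
  rw [uIcc_of_le (by norm_num)] at hx
  simp only [splineExt_of_mem s hx]

/-- The kernel sum `σ̃_N` before normalisation, with frequency weights `k^l`: up to a factor `i^l`
this is its `l`-th derivative. -/
noncomputable def momentSum (s N l : ℕ) (t : ℝ) : ℂ :=
  ∑ k ∈ Finset.Icc (-(N : ℤ)) (N : ℤ),
    (k : ℂ) ^ l * (gtilde s ((k : ℝ) / (2 * ((N : ℝ) + 1))) : ℂ) *
      Complex.exp ((k : ℂ) * t * Complex.I)

/-- The compactly supported function whose values at the integers sum to `momentSum`. -/
noncomputable def momentFun (s N l : ℕ) (t x : ℝ) : ℂ :=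
  (x : ℂ) ^ l * (splineExt s (x / (N + 1)) : ℂ) * Complex.exp ((x : ℂ) * t * Complex.I)

lemma continuous_momentFun {s : ℕ} (hs : 2 ≤ s) (N l : ℕ) (t : ℝ) :
    Continuous (momentFun s N l t) := by
  have := continuous_splineExt hs
  unfold momentFun
  fun_prop

lemma momentFun_eq_zero {s : ℕ} (hs : 2 ≤ s) (N l : ℕ) (t : ℝ) {x : ℝ} (hx : (N : ℝ) + 1 ≤ |x|) :
    momentFun s N l t x = 0 := by
  have hN : (0 : ℝ) < N + 1 := by positivity
  rw [momentFun, splineExt_eq_zero hs, Complex.ofReal_zero, mul_zero, zero_mul]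
  rwa [abs_div, abs_of_pos hN, le_div_iff₀ hN, one_mul]

lemma tsum_momentFun {s : ℕ} (hs : 2 ≤ s) (N l : ℕ) (t : ℝ) :
    ∑' k : ℤ, momentFun s N l t k = momentSum s N l t := by
  have hN : (0 : ℝ) < N + 1 := by positivity
  rw [tsum_eq_sum (s := Finset.Icc (-(N : ℤ)) (N : ℤ)), momentSum]
  · refine Finset.sum_congr rfl fun k hk => ?_
    rw [Finset.mem_Icc] at hk
    have hlo : -(N : ℝ) ≤ k := by exact_mod_cast hk.1
    have hhi : (k : ℝ) ≤ N := by exact_mod_cast hk.2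
    have hmem : (k : ℝ) / (N + 1) ∈ Icc (-1 : ℝ) 1 := by
      rw [mem_Icc, le_div_iff₀ hN, div_le_iff₀ hN]
      constructor <;> linarith
    rw [momentFun, splineExt_of_mem s hmem, gtilde,
      show 2 * ((k : ℝ) / (2 * ((N : ℝ) + 1))) = k / (N + 1) by field]
    simp only [Complex.ofReal_intCast]
  · intro k hk
    refine momentFun_eq_zero hs N l t ?_
    rw [Finset.mem_Icc, ← abs_le, not_le] at hk
    exact_mod_cast hk

lemma fourier_momentFun {s : ℕ} (hs : 2 ≤ s) (N l : ℕ) (t : ℝ) (m : ℤ) :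
    FourierTransform.fourier (momentFun s N l t) m =
      ((N : ℂ) + 1) ^ (l + 1) *
        splinePairing s (s - 1) (expMonomial l ((N + 1) * (t - 2 * π * m))) := by
  have hN : (0 : ℝ) < N + 1 := by positivity
  have hNc : (N : ℂ) + 1 ≠ 0 := by exact_mod_cast N.succ_ne_zero
  set ξ : ℝ := (N + 1) * (t - 2 * π * m) with hξ
  have hscale (v : ℝ) : Complex.exp (↑(-2 * π * v * m) * Complex.I) • momentFun s N l t v =
      ((N : ℂ) + 1) ^ l * ((splineExt s (v / (N + 1)) : ℂ) * expMonomial l ξ (v / (N + 1))) := by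
    have hexp : Complex.exp (Complex.I * ξ * (v / (N + 1) : ℝ)) =
        Complex.exp (↑(-2 * π * v * m) * Complex.I) * Complex.exp ((v : ℂ) * t * Complex.I) := by
      rw [← Complex.exp_add, hξ]
      congr 1
      push_cast
      field
    rw [momentFun, expMonomial, hexp, smul_eq_mul]
    push_cast
    rw [div_pow]
    field
  rw [Real.fourier_real_eq_integral_exp_smul]
  simp only [hscale]
  rw [Measure.integral_comp_div
    (fun y => ((N : ℂ) + 1) ^ l * ((splineExt s y : ℂ) * expMonomial l ξ y)), abs_of_pos hN,
    integral_const_mul, integral_splineExt_mul hs, Complex.real_smul]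
  push_cast
  ring

lemma momentSum_eq_tsum {s : ℕ} (hs : 2 ≤ s) (N l : ℕ) (t : ℝ)
    (hsum : Summable fun m : ℤ =>
      splinePairing s (s - 1) (expMonomial l ((N + 1) * (t - 2 * π * m)))) :
    momentSum s N l t = ((N : ℂ) + 1) ^ (l + 1) *
      ∑' m : ℤ, splinePairing s (s - 1) (expMonomial l ((N + 1) * (t - 2 * π * m))) := by
  have hdecay : momentFun s N l t =O[Filter.cocompact ℝ] fun x : ℝ => |x| ^ (-(2 : ℝ)) := by
    refine Filter.EventuallyEq.trans_isBigO (f₂ := fun _ => (0 : ℂ)) ?_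
      (Asymptotics.isBigO_zero _ _)
    have hcompact : IsCompact (Icc (-((N : ℝ) + 1)) (N + 1)) := isCompact_Icc
    filter_upwards [hcompact.compl_mem_cocompact] with x hx
    rw [mem_compl_iff, mem_Icc, ← abs_le, not_le] at hx
    exact momentFun_eq_zero hs N l t hx.le
  have hpoisson := Real.tsum_eq_tsum_fourier_of_rpow_decay_of_summable
    (continuous_momentFun hs N l t) one_lt_two hdecay
    (by simpa only [fourier_momentFun hs] using hsum.mul_left _) 0
  simp only [zero_add, fourier_momentFun hs, tsum_momentFun hs] at hpoisson
  rw [hpoisson, ← tsum_mul_left]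
  simp

lemma hasSum_one_div_odd_pow_le {s : ℕ} (hs : 6 ≤ s) :
    ∃ W ≤ (1.025 : ℝ), HasSum (fun n : ℕ => 1 / (2 * (n : ℝ) + 1) ^ s) W := by
  have htail (n : ℕ) : 1 / (2 * ((n + 1 : ℕ) : ℝ) + 1) ^ s ≤ 1 / 81 * (1 / ((n : ℝ) + 1) ^ 2) := by
    have : (0 : ℝ) ≤ n := n.cast_nonneg
    rw [div_mul_div_comm, mul_one, Nat.cast_succ]
    gcongr
    calc 81 * ((n : ℝ) + 1) ^ 2 = 3 ^ 4 * ((n : ℝ) + 1) ^ 2 := by norm_num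
      _ ≤ (2 * ((n : ℝ) + 1) + 1) ^ 4 * (2 * ((n : ℝ) + 1) + 1) ^ 2 := by gcongr <;> linarith
      _ = (2 * ((n : ℝ) + 1) + 1) ^ 6 := by ring
      _ ≤ _ := pow_le_pow_right₀ (by linarith) hs
  have hbound := (hasSum_zetaNat le_rfl).mul_left (1 / 81)
  have htail_summable : Summable fun n : ℕ => 1 / (2 * ((n + 1 : ℕ) : ℝ) + 1) ^ s :=
    .of_nonneg_of_le (fun n => by positivity) htail hbound.summable
  have hsummable : Summable fun n : ℕ => 1 / (2 * (n : ℝ) + 1) ^ s :=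
    (summable_nat_add_iff (f := fun n : ℕ => 1 / (2 * (n : ℝ) + 1) ^ s) 1).1 htail_summable
  refine ⟨∑' n : ℕ, 1 / (2 * (n : ℝ) + 1) ^ s, ?_, hsummable.hasSum⟩
  have hhead : 1 / (2 * ((0 : ℕ) : ℝ) + 1) ^ s = 1 := by
    rw [Nat.cast_zero, mul_zero, zero_add, one_pow, div_one]
  rw [hsummable.tsum_eq_zero_add, hhead]
  linarith [hasSum_le htail htail_summable.hasSum hbound, zetaNat_two_le]

lemma norm_natCast_add_one (N : ℕ) : ‖(N : ℂ) + 1‖ = (N : ℝ) + 1 := by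
  rw [← Nat.cast_succ, Complex.norm_natCast, Nat.cast_succ]

lemma norm_momentSum_le {s : ℕ} (hs : 6 ≤ s) (N : ℕ) {l : ℕ} (hl : l ≤ 2) {t : ℝ} (ht : 0 < t)
    (htπ : t ≤ π) :
    ‖momentSum s N l t‖ ≤ ((N : ℝ) + 1) ^ (l + 1) *
      (2.05 * (2 * s * decayConst l / (((N : ℝ) + 1) * t) ^ s)) := by
  have hN : (0 : ℝ) < N + 1 := by positivity
  have hη : 0 < ((N : ℝ) + 1) * t := by positivity
  obtain ⟨W, hW, hsumW⟩ := hasSum_one_div_odd_pow_le hs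
  set B := 2 * s * decayConst l / (((N : ℝ) + 1) * t) ^ s
  have hB0 : 0 ≤ B := by have := decayConst_nonneg l; positivity
  have hterm (n : ℕ) (m : ℤ) (h : (2 * n + 1) * t ≤ |t - 2 * π * m|) :
      ‖splinePairing s (s - 1) (expMonomial l ((N + 1) * (t - 2 * π * m)))‖ ≤
        B * (1 / (2 * (n : ℝ) + 1) ^ s) := by
    refine norm_splinePairing_pred_expMonomial_le (by omega) hl (by positivity) hη ?_
    rw [abs_mul, abs_of_pos hN, mul_left_comm]
    gcongr
  have hscale (n : ℕ) : (n : ℝ) * t ≤ n * π := by gcongr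
  obtain ⟨hsum, hbound⟩ := summable_int_and_norm_tsum_le
    (F := fun m : ℤ => splinePairing s (s - 1) (expMonomial l ((N + 1) * (t - 2 * π * m))))
    (hsumW.mul_left B)
    (fun n => hterm n _ (by rw [le_abs]; right; push_cast; linarith [hscale n]))
    (fun n => hterm n _ (by rw [le_abs]; left; push_cast; linarith [hscale n]))
  rw [momentSum_eq_tsum (by omega) N l t hsum, norm_mul, norm_pow, norm_natCast_add_one]
  gcongr
  exact hbound.trans (by nlinarith)

lemma norm_momentSum_zero_sub_le {s : ℕ} (hs : 3 ≤ s) (N : ℕ) {l : ℕ} (hl : l ≤ 2) :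
    ‖momentSum s N l 0 -
        ((N : ℂ) + 1) ^ (l + 1) * splinePairing s (s - 1) (fun x => (x : ℂ) ^ l)‖ ≤
      ((N : ℝ) + 1) ^ (l + 1) * (4 * (2 * s * decayConst l / (2 * π * ((N : ℝ) + 1)) ^ s)) := by
  have hN : (0 : ℝ) < N + 1 := by positivity
  have hη : 0 < 2 * π * ((N : ℝ) + 1) := by positivity
  set B := 2 * s * decayConst l / (2 * π * ((N : ℝ) + 1)) ^ s
  have hB0 : 0 ≤ B := by have := decayConst_nonneg l; positivity
  set F : ℤ → ℂ :=
    fun m => splinePairing s (s - 1) (expMonomial l ((N + 1) * ((0 : ℝ) - 2 * π * m))) with hF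
  have hterm (n : ℕ) (m : ℤ) (h : |(m : ℝ)| = n + 1) :
      ‖F m‖ ≤ B * (1 / ((n : ℝ) + 1) ^ 2) := by
    have hdecay : ‖F m‖ ≤ B * (1 / ((n : ℝ) + 1) ^ s) := by
      refine norm_splinePairing_pred_expMonomial_le hs hl (by positivity) hη ?_
      rw [zero_sub, abs_mul, abs_neg, abs_mul, abs_of_pos hN, abs_of_pos Real.two_pi_pos, h]
      exact le_of_eq (by ring)
    refine hdecay.trans ?_
    gcongr
    · linarith [n.cast_nonneg (α := ℝ)]
    · omega
  have hF0 : F 0 = splinePairing s (s - 1) (fun x => (x : ℂ) ^ l) := by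
    simp only [hF]
    congr 1 with x
    simp [expMonomial]
  have hcast (n : ℕ) : |(n : ℝ) + 1| = n + 1 := abs_of_pos (by positivity)
  obtain ⟨hsum, hbound⟩ := summable_int_and_norm_tsum_sub_le (F := F)
    ((hasSum_zetaNat le_rfl).mul_left B)
    (fun n => hterm n _ (by push_cast; exact hcast n))
    (fun n => hterm n _ (by push_cast; rw [abs_neg]; exact hcast n))
  rw [momentSum_eq_tsum (by omega) N l 0 hsum, ← hF0, ← mul_sub, norm_mul, norm_pow,
    norm_natCast_add_one]
  gcongr
  exact hbound.trans (by nlinarith [zetaNat_two_le])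

end

/-! ### The trigonometric kernel -/

lemma momentSum_zero_zero (s N : ℕ) : momentSum s N 0 0 = gnorm s N := by
  simp [momentSum, gnorm]

lemma factorial_succ_le_pow (n : ℕ) : (n + 1).factorial ≤ (n + 1) ^ n := by
  simpa only [Nat.factorial_one, one_mul, add_comm 1 n] using
    (Nat.factorial_mul_ascFactorial 1 n).symm.trans_le
      (Nat.mul_le_mul_left _ (Nat.ascFactorial_le_pow_add 1 n))

lemma mul_factorial_le_two_pi_pow {s N : ℕ} (hs : 6 ≤ s) (hN : 2 * s ≤ N) :
    46656 * (s * (2 ^ s * s.factorial)) ≤ (2 * π * ((N : ℝ) + 1)) ^ s := by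
  have hNs : 2 * (s : ℝ) ≤ N := by exact_mod_cast hN
  have hfact : (s : ℝ) * s.factorial ≤ s ^ s := by
    obtain ⟨n, rfl⟩ : ∃ n, s = n + 1 := ⟨s - 1, by omega⟩
    rw [pow_succ']
    gcongr
    exact_mod_cast factorial_succ_le_pow n
  calc 46656 * (s * (2 ^ s * s.factorial)) = 6 ^ 6 * 2 ^ s * ((s : ℝ) * s.factorial) := by ring
    _ ≤ 6 ^ s * 2 ^ s * s ^ s := by gcongr; norm_num
    _ = (6 * (2 * s)) ^ s := by rw [mul_pow, mul_pow, mul_assoc]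
    _ ≤ (2 * π * ((N : ℝ) + 1)) ^ s := by
      gcongr
      · linarith [Real.pi_gt_three]
      · linarith

lemma poisson_error_le {s N : ℕ} (hs : 6 ≤ s) (hN : 2 * s ≤ N) {c : ℝ} (hc : 0 ≤ c) :
    4 * (2 * s * c / (2 * π * ((N : ℝ) + 1)) ^ s) ≤ c * splineMass s / (20000 * s) := by
  have : (0 : ℝ) < s := by positivity
  calc 4 * (2 * s * c / (2 * π * ((N : ℝ) + 1)) ^ s)
      ≤ 4 * (2 * s * c / (46656 * (s * (2 ^ s * s.factorial)))) := by
        gcongr; exact mul_factorial_le_two_pi_pow hs hN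
    _ = c * splineMass s / (23328 * s) := by unfold splineMass; field_simp; ring
    _ ≤ c * splineMass s / (20000 * s) := by
        have := splineMass_pos (s := s) (by omega)
        gcongr
        norm_num

lemma abs_gnorm_sub_le {s N : ℕ} (hs : 6 ≤ s) (hN : 2 * s ≤ N) :
    |gnorm s N - ((N : ℝ) + 1) * splineMass s| ≤ ((N : ℝ) + 1) * (splineMass s / 10000) := by
  have hmass := splineMass_pos (s := s) (by omega)
  have hs1 : (1 : ℝ) ≤ s := by exact_mod_cast (by omega : 1 ≤ s)
  have h := norm_momentSum_zero_sub_le (by omega : 3 ≤ s) N (l := 0) (by norm_num)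
  simp only [pow_zero, zero_add, pow_one] at h
  rw [momentSum_zero_zero, splinePairing_pred_one (by omega)] at h
  rw [← Real.norm_eq_abs, ← Complex.norm_real]
  push_cast
  refine h.trans (mul_le_mul_of_nonneg_left
    ((poisson_error_le hs hN (decayConst_nonneg 0)).trans ?_) (by positivity))
  rw [decayConst, one_mul]
  gcongr
  linarith

lemma gnorm_ge {s N : ℕ} (hs : 6 ≤ s) (hN : 2 * s ≤ N) :
    0.9999 * (((N : ℝ) + 1) * splineMass s) ≤ gnorm s N := by
  linarith [(abs_le.1 (abs_gnorm_sub_le hs hN)).1]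

lemma gnorm_pos {s N : ℕ} (hs : 6 ≤ s) (hN : 2 * s ≤ N) : 0 < gnorm s N := by
  have := splineMass_pos (s := s) (by omega)
  exact lt_of_lt_of_le (by positivity) (gnorm_ge hs hN)

lemma hasDerivAt_momentSum (s N l : ℕ) (t : ℝ) :
    HasDerivAt (momentSum s N l) (Complex.I * momentSum s N (l + 1) t) t := by
  unfold momentSum
  rw [Finset.mul_sum]
  refine HasDerivAt.fun_sum fun k _ => ?_
  convert! (((Complex.ofRealCLM.hasDerivAt (x := t)).const_mul (k : ℂ)).mul_const
    Complex.I).cexp.const_mul ((k : ℂ) ^ l * (gtilde s ((k : ℝ) / (2 * ((N : ℝ) + 1))) : ℂ)) using 1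
  simp only [Complex.ofRealCLM_apply, Complex.ofReal_one]
  ring

lemma iteratedDeriv_sigmaT (s N l : ℕ) :
    iteratedDeriv l (sigmaT s N) =
      fun t => (1 / (gnorm s N : ℂ) * (Complex.I ^ l * momentSum s N l t)).re := by
  induction l with
  | zero => funext t; simp [sigmaT, momentSum]
  | succ l ih =>
    funext t
    rw [iteratedDeriv_succ, ih]
    have h := ((hasDerivAt_momentSum s N l t).const_mul (Complex.I ^ l)).const_mul
      (1 / (gnorm s N : ℂ))
    rw [← mul_assoc (Complex.I ^ l), ← pow_succ] at h
    exact (Complex.reCLM.hasFDerivAt.comp_hasDerivAt t h).deriv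

lemma sigmaT_zero {s N : ℕ} (hg : gnorm s N ≠ 0) : sigmaT s N 0 = 1 := by
  rw [← iteratedDeriv_zero (f := sigmaT s N), iteratedDeriv_sigmaT]
  beta_reduce
  rw [momentSum_zero_zero, pow_zero, one_mul, one_div_mul_cancel (by exact_mod_cast hg),
    Complex.one_re]

lemma abs_iteratedDeriv_sigmaT_le {s N : ℕ} (hs : 6 ≤ s) (hN : 2 * s ≤ N) {l : ℕ} (hl : l ≤ 2)
    {t : ℝ} (ht : 0 < t) (htπ : t ≤ π) :
    |iteratedDeriv l (sigmaT s N) t| ≤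
      1.03 * (2 ^ s * s.factorial) * decayConst l * ((N : ℝ) + 1) ^ l /
        (((N : ℝ) + 1) * t) ^ s := by
  have : (0 : ℝ) < s := by positivity
  have hg := gnorm_pos hs hN
  have hD := decayConst_nonneg l
  have hnorm : |iteratedDeriv l (sigmaT s N) t| ≤ ‖momentSum s N l t‖ / gnorm s N := by
    rw [iteratedDeriv_sigmaT]
    refine (Complex.abs_re_le_norm _).trans_eq ?_
    rw [norm_mul, norm_mul, norm_pow, Complex.norm_I, one_pow, one_mul, norm_div, norm_one,
      Complex.norm_real, Real.norm_eq_abs, abs_of_pos hg, one_div_mul_eq_div]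
  refine hnorm.trans ((div_le_iff₀ hg).2 ((norm_momentSum_le hs N hl ht htπ).trans ?_))
  set q := (((N : ℝ) + 1) * t) ^ s
  have hq0 : 0 < q := by positivity
  calc ((N : ℝ) + 1) ^ (l + 1) * (2.05 * (2 * s * decayConst l / q))
      = 4.1 * (((N : ℝ) + 1) ^ (l + 1) * (s * decayConst l / q)) := by ring
    _ ≤ 1.03 * 0.9999 * 4 * (((N : ℝ) + 1) ^ (l + 1) * (s * decayConst l / q)) := by
        gcongr; norm_num
    _ = 1.03 * (2 ^ s * s.factorial) * decayConst l * ((N : ℝ) + 1) ^ l / q *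
          (0.9999 * (((N : ℝ) + 1) * splineMass s)) := by
        unfold splineMass; field_simp; ring
    _ ≤ _ := mul_le_mul_of_nonneg_left (gnorm_ge hs hN) (by positivity)

lemma re_momentSum_two_zero_ge {s N : ℕ} (hs : 6 ≤ s) (hN : 2 * s ≤ N) :
    0.9993 * (((N : ℝ) + 1) ^ 3 * (splineMass s / (2 * (s + 1)))) ≤ (momentSum s N 2 0).re := by
  have hs6 : (6 : ℝ) ≤ s := by exact_mod_cast hs
  have hmass := splineMass_pos (s := s) (by omega)
  have herr : 4 * (2 * s * decayConst 2 / (2 * π * ((N : ℝ) + 1)) ^ s) ≤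
      0.0007 * (splineMass s / (2 * (s + 1))) := by
    refine (poisson_error_le hs hN (decayConst_nonneg 2)).trans ?_
    simp only [decayConst]
    rw [mul_div_assoc', div_le_div_iff₀ (by positivity) (by positivity)]
    nlinarith
  have hmoment := norm_momentSum_zero_sub_le (by omega : 3 ≤ s) N (l := 2) le_rfl
  rw [splinePairing_pred_sq (by omega)] at hmoment
  have hre := (abs_le.1 ((Complex.abs_re_le_norm _).trans hmoment)).1
  rw [Complex.sub_re, show ((N : ℂ) + 1) ^ (2 + 1) * (splineMass s / (2 * (s + 1))) =
    ((((N : ℝ) + 1) ^ 3 * (splineMass s / (2 * (s + 1))) : ℝ) : ℂ) by push_cast; rfl,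
    Complex.ofReal_re] at hre
  have := mul_le_mul_of_nonneg_left herr (by positivity : 0 ≤ ((N : ℝ) + 1) ^ 3)
  linarith

lemma neg_iteratedDeriv_two_sigmaT_zero_ge {s N : ℕ} (hs : 6 ≤ s) (hN : 2 * s ≤ N) :
    0.999 / (2 * ((s : ℝ) + 1)) * ((N : ℝ) + 1) ^ 2 ≤ -iteratedDeriv 2 (sigmaT s N) 0 := by
  have hmass := splineMass_pos (s := s) (by omega)
  have hg : gnorm s N ≤ 1.0001 * (((N : ℝ) + 1) * splineMass s) := by
    linarith [(abs_le.1 (abs_gnorm_sub_le hs hN)).2]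
  have hvalue : -iteratedDeriv 2 (sigmaT s N) 0 = (momentSum s N 2 0).re / gnorm s N := by
    rw [iteratedDeriv_sigmaT]
    beta_reduce
    rw [Complex.I_sq, show 1 / (gnorm s N : ℂ) * (-1 * momentSum s N 2 0) =
      ((-(1 / gnorm s N) : ℝ) : ℂ) * momentSum s N 2 0 by push_cast; ring, Complex.re_ofReal_mul]
    ring
  rw [hvalue, le_div_iff₀ (gnorm_pos hs hN)]
  calc 0.999 / (2 * ((s : ℝ) + 1)) * ((N : ℝ) + 1) ^ 2 * gnorm s N
      ≤ 0.999 / (2 * ((s : ℝ) + 1)) * ((N : ℝ) + 1) ^ 2 *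
          (1.0001 * (((N : ℝ) + 1) * splineMass s)) := by gcongr
    _ = 0.999 * 1.0001 * (((N : ℝ) + 1) ^ 3 * (splineMass s / (2 * (s + 1)))) := by ring
    _ ≤ 0.9993 * (((N : ℝ) + 1) ^ 3 * (splineMass s / (2 * (s + 1)))) := by gcongr; norm_num
    _ ≤ _ := re_momentSum_two_zero_ge hs hN

/-- The polynomial `p` with `σ̃_N(t) = p(cos t)`. As `cos ω(x)` is affine in the trace of `x`, it
extends the zonal kernel smoothly across the cut locus `ω = 0, π`. -/
noncomputable def sigmaPoly (s N : ℕ) : Polynomial ℝ :=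
  ∑ k ∈ Finset.Icc (-(N : ℤ)) (N : ℤ),
    Polynomial.C (gtilde s ((k : ℝ) / (2 * ((N : ℝ) + 1))) / gnorm s N) *
      Polynomial.Chebyshev.T ℝ k

lemma sigmaPoly_eval_cos (s N : ℕ) (t : ℝ) : (sigmaPoly s N).eval (Real.cos t) = sigmaT s N t := by
  rw [sigmaPoly, Polynomial.eval_finsetSum, sigmaT, Finset.mul_sum, Complex.re_sum]
  refine Finset.sum_congr rfl fun k _ => ?_
  rw [Polynomial.eval_mul, Polynomial.eval_C, Polynomial.Chebyshev.T_real_cos,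
    show (1 / (gnorm s N : ℂ)) * ((gtilde s ((k : ℝ) / (2 * ((N : ℝ) + 1))) : ℂ) *
      Complex.exp ((k : ℂ) * t * Complex.I)) =
      ((gtilde s ((k : ℝ) / (2 * ((N : ℝ) + 1))) / gnorm s N : ℝ) : ℂ) *
        Complex.exp (((k * t : ℝ) : ℂ) * Complex.I) by push_cast; ring, Complex.re_ofReal_mul,
    Complex.exp_ofReal_mul_I_re]

lemma deriv_sigmaT (s N : ℕ) :
    deriv (sigmaT s N) =
      fun t => -(Real.sin t * (sigmaPoly s N).derivative.eval (Real.cos t)) := by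
  funext t
  rw [← funext (sigmaPoly_eval_cos s N)]
  refine (((sigmaPoly s N).hasDerivAt _).comp t (Real.hasDerivAt_cos t)).deriv.trans ?_
  ring

lemma iteratedDeriv_two_sigmaT (s N : ℕ) (t : ℝ) :
    iteratedDeriv 2 (sigmaT s N) t =
      Real.sin t ^ 2 * (sigmaPoly s N).derivative.derivative.eval (Real.cos t) -
        Real.cos t * (sigmaPoly s N).derivative.eval (Real.cos t) := by
  rw [iteratedDeriv_succ, iteratedDeriv_one, deriv_sigmaT]
  refine (((Real.hasDerivAt_sin t).mul
    (((sigmaPoly s N).derivative.hasDerivAt _).comp t (Real.hasDerivAt_cos t))).neg).deriv.trans ?_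
  simp only [Function.comp_apply]
  ring

/-! ### Rotations as quaternions -/

/-- Four times the Gram matrix of the quaternion of a rotation `z`: the entries of the quaternion
`q` of `z` satisfy `4 * q i * q j = davenportMatrix z i j`. -/
def davenportMatrix (z : Mat3) : Matrix (Fin 4) (Fin 4) ℝ :=
  !![1 + z 0 0 + z 1 1 + z 2 2, z 2 1 - z 1 2, z 0 2 - z 2 0, z 1 0 - z 0 1;
    z 2 1 - z 1 2, 1 + z 0 0 - z 1 1 - z 2 2, z 0 1 + z 1 0, z 0 2 + z 2 0;
    z 0 2 - z 2 0, z 0 1 + z 1 0, 1 - z 0 0 + z 1 1 - z 2 2, z 1 2 + z 2 1;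
    z 1 0 - z 0 1, z 0 2 + z 2 0, z 1 2 + z 2 1, 1 - z 0 0 - z 1 1 + z 2 2]

/-- The matrix of `x ↦ q x q̄` on imaginary quaternions `x`, for the quaternion `q = a + v` with
real part `a` and imaginary part `v`; a rotation when `a ^ 2 + ‖v‖ ^ 2 = 1`. -/
def quatRotation (a : ℝ) (v : EuclideanSpace ℝ (Fin 3)) : Mat3 :=
  !![a ^ 2 + v 0 ^ 2 - v 1 ^ 2 - v 2 ^ 2, 2 * (v 0 * v 1 - a * v 2), 2 * (v 0 * v 2 + a * v 1);
    2 * (v 0 * v 1 + a * v 2), a ^ 2 - v 0 ^ 2 + v 1 ^ 2 - v 2 ^ 2, 2 * (v 1 * v 2 - a * v 0);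
    2 * (v 0 * v 2 - a * v 1), 2 * (v 1 * v 2 + a * v 0), a ^ 2 - v 0 ^ 2 - v 1 ^ 2 + v 2 ^ 2]

lemma norm_sq_eq_add_three (v : EuclideanSpace ℝ (Fin 3)) :
    ‖v‖ ^ 2 = v 0 ^ 2 + v 1 ^ 2 + v 2 ^ 2 := by
  rw [EuclideanSpace.real_norm_sq_eq, Fin.sum_univ_three]

lemma quatRotation_neg (a : ℝ) (v : EuclideanSpace ℝ (Fin 3)) :
    quatRotation (-a) (-v) = quatRotation a v := by
  simp [quatRotation]

lemma trace_quatRotation (a : ℝ) (v : EuclideanSpace ℝ (Fin 3)) :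
    (quatRotation a v).trace = 3 * a ^ 2 - ‖v‖ ^ 2 := by
  rw [norm_sq_eq_add_three, quatRotation, Matrix.trace_fin_three_of]
  ring

lemma trace_quatRotation_mul_transpose (a b : ℝ) (v w : EuclideanSpace ℝ (Fin 3)) :
    (quatRotation a v * (quatRotation b w).transpose).trace =
      4 * (a * b + inner ℝ v w) ^ 2 - (a ^ 2 + ‖v‖ ^ 2) * (b ^ 2 + ‖w‖ ^ 2) := by
  rw [norm_sq_eq_add_three, norm_sq_eq_add_three, PiLp.inner_apply, Fin.sum_univ_three]
  simp only [quatRotation, Matrix.trace_fin_three, Matrix.mul_apply, Fin.sum_univ_three,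
    Matrix.transpose_apply, Matrix.of_apply, Matrix.cons_val, RCLike.inner_apply, conj_trivial]
  ring

/-- A matrix with positive trace all of whose relevant minors vanish is a Gram matrix of rank
one. -/
lemma exists_mul_eq_of_minors {n : Type*} [Fintype n] {Q : Matrix n n ℝ}
    (hQ : ∀ p i j, Q p p * Q i j = Q i p * Q j p) (htr : 0 < Q.trace) :
    ∃ q : n → ℝ, ∀ i j, q i * q j = Q i j := by
  obtain ⟨p, -, hp⟩ := Finset.exists_lt_of_sum_lt (s := Finset.univ) (f := fun _ : n => (0 : ℝ))
    (g := fun i => Q i i) (Finset.sum_const_zero.trans_lt htr)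
  refine ⟨fun i => Q i p / √(Q p p), fun i j => ?_⟩
  rw [div_mul_div_comm, Real.mul_self_sqrt hp.le, ← hQ, mul_div_cancel_left₀ _ hp.ne']

namespace IsSO3

lemma mul_transpose {x : Mat3} (hx : IsSO3 x) : x * x.transpose = 1 :=
  mul_eq_one_comm.1 hx.1

lemma inv_eq {x : Mat3} (hx : IsSO3 x) : x⁻¹ = x.transpose :=
  Matrix.inv_eq_left_inv hx.1

lemma inv {x : Mat3} (hx : IsSO3 x) : IsSO3 x⁻¹ := by
  rw [hx.inv_eq]
  exact ⟨x.transpose_transpose.symm ▸ hx.mul_transpose, x.det_transpose.trans hx.2⟩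

lemma mul {x y : Mat3} (hx : IsSO3 x) (hy : IsSO3 y) : IsSO3 (x * y) := by
  refine ⟨?_, by rw [Matrix.det_mul, hx.2, hy.2, one_mul]⟩
  rw [Matrix.transpose_mul, mul_assoc, ← mul_assoc _ x, hx.1, one_mul, hy.1]

lemma inv_mul {x y : Mat3} (hx : IsSO3 x) (hy : IsSO3 y) : IsSO3 (y⁻¹ * x) := hy.inv.mul hx

lemma inv_mul_self {x : Mat3} (hx : IsSO3 x) : x⁻¹ * x = 1 := by rw [hx.inv_eq, hx.1]

lemma adjugate_eq {z : Mat3} (hz : IsSO3 z) : z.adjugate = z.transpose := by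
  rw [← hz.inv_eq, Matrix.inv_def, hz.2, Ring.inverse_one, one_smul]

set_option maxHeartbeats 1000000 in
-- All 64 identities are linear in the entries of `zᵀz = 1`, `zzᵀ = 1` and `adj z = zᵀ`.
lemma davenportMatrix_mul {z : Mat3} (hz : IsSO3 z) (p i j : Fin 4) :
    davenportMatrix z p p * davenportMatrix z i j =
      davenportMatrix z i p * davenportMatrix z j p := by
  have hcol := hz.1
  have hrow := hz.mul_transpose
  have hadj := hz.adjugate_eq
  rw [Matrix.adjugate_fin_three] at hadj
  simp only [← Matrix.ext_iff, Fin.forall_fin_succ, Matrix.mul_apply, Fin.sum_univ_three,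
    Matrix.transpose_apply, Matrix.one_fin_three, Matrix.of_apply, Matrix.cons_val,
    Fin.succ_zero_eq_one, Fin.succ_one_eq_two, and_true, Fin.isValue, IsEmpty.forall_iff]
    at hcol hrow hadj
  fin_cases p <;> fin_cases i <;> fin_cases j <;>
    simp only [davenportMatrix, Fin.reduceFinMk, Matrix.of_apply, Matrix.cons_val, Fin.isValue,
      Fin.mk_one, Fin.zero_eta] <;>
    linarith

lemma exists_quatRotation {z : Mat3} (hz : IsSO3 z) :
    ∃ (a : ℝ) (v : EuclideanSpace ℝ (Fin 3)),
      0 ≤ a ∧ a ^ 2 + ‖v‖ ^ 2 = 1 ∧ z = quatRotation a v := by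
  have htr : (davenportMatrix z).trace = 4 := by
    simp only [davenportMatrix, Matrix.trace, Fin.sum_univ_four, Matrix.diag_apply,
      Matrix.of_apply, Matrix.cons_val]
    ring
  obtain ⟨q, hq⟩ := exists_mul_eq_of_minors hz.davenportMatrix_mul (htr ▸ four_pos)
  simp only [Fin.forall_fin_succ, davenportMatrix, Matrix.of_apply, Matrix.cons_val, and_true,
    Fin.succ_zero_eq_one, Fin.succ_one_eq_two, Fin.reduceSucc, Fin.isValue, IsEmpty.forall_iff]
    at hq
  let v : EuclideanSpace ℝ (Fin 3) := !₂[q 1 / 2, q 2 / 2, q 3 / 2]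
  have hv0 : v 0 = q 1 / 2 := rfl
  have hv1 : v 1 = q 2 / 2 := rfl
  have hv2 : v 2 = q 3 / 2 := rfl
  have hnorm : (q 0 / 2) ^ 2 + ‖v‖ ^ 2 = 1 := by
    rw [norm_sq_eq_add_three, hv0, hv1, hv2]
    linarith
  have hzv : z = quatRotation (q 0 / 2) v := by
    ext i j
    fin_cases i <;> fin_cases j <;> simp [quatRotation, hv0, hv1, hv2] <;> linarith
  rcases le_total 0 (q 0) with h | h
  · exact ⟨q 0 / 2, v, by linarith, hnorm, hzv⟩
  · exact ⟨-(q 0 / 2), -v, by linarith, by rwa [neg_sq, norm_neg], by rwa [quatRotation_neg]⟩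

end IsSO3

lemma rotAngle_nonneg (z : Mat3) : 0 ≤ rotAngle z := Real.arccos_nonneg _

lemma rotAngle_le_pi (z : Mat3) : rotAngle z ≤ π := Real.arccos_le_pi _

lemma rotAngle_quatRotation {a : ℝ} {v : EuclideanSpace ℝ (Fin 3)} (h0 : 0 ≤ a)
    (h1 : a ^ 2 + ‖v‖ ^ 2 = 1) : rotAngle (quatRotation a v) = 2 * Real.arccos a := by
  have ha : a ≤ 1 := by nlinarith [sq_nonneg ‖v‖]
  have e : ((quatRotation a v).trace - 1) / 2 = Real.cos (2 * Real.arccos a) := by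
    rw [trace_quatRotation, Real.cos_two_mul, Real.cos_arccos (by linarith) ha]
    linarith
  rw [rotAngle, e, Real.arccos_cos (mul_nonneg two_pos.le (Real.arccos_nonneg a))]
  linarith [Real.arccos_le_pi_div_two.2 h0]

lemma exists_norm_eq_one_smul {E : Type*} [NormedAddCommGroup E] [NormedSpace ℝ E] [Nontrivial E]
    (v : E) : ∃ n : E, ‖n‖ = 1 ∧ v = ‖v‖ • n := by
  rcases eq_or_ne v 0 with rfl | hv
  · obtain ⟨n, hn⟩ := exists_norm_eq E zero_le_one
    exact ⟨n, hn, by simp⟩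
  · exact ⟨‖v‖⁻¹ • v, norm_smul_inv_norm hv, (smul_inv_smul₀ (norm_ne_zero_iff.2 hv) v).symm⟩

namespace IsSO3

lemma cos_rotAngle {z : Mat3} (hz : IsSO3 z) : Real.cos (rotAngle z) = (z.trace - 1) / 2 := by
  obtain ⟨a, v, -, h1, rfl⟩ := hz.exists_quatRotation
  rw [rotAngle, trace_quatRotation, Real.cos_arccos] <;>
    nlinarith [sq_nonneg a, sq_nonneg ‖v‖]

lemma exists_axis {z : Mat3} (hz : IsSO3 z) :
    ∃ n : EuclideanSpace ℝ (Fin 3), ‖n‖ = 1 ∧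
      z = quatRotation (Real.cos (rotAngle z / 2)) (Real.sin (rotAngle z / 2) • n) := by
  obtain ⟨a, v, h0, h1, hzv⟩ := hz.exists_quatRotation
  obtain ⟨n, hn, hvn⟩ := exists_norm_eq_one_smul v
  have ha : a ≤ 1 := by nlinarith [sq_nonneg ‖v‖]
  refine ⟨n, hn, ?_⟩
  conv_lhs => rw [hzv]
  have hsin : √(1 - a ^ 2) = ‖v‖ := by
    rw [← h1, add_sub_cancel_left, Real.sqrt_sq (norm_nonneg v)]
  rw [hzv, rotAngle_quatRotation h0 h1, mul_div_cancel_left₀ _ two_ne_zero, Real.sin_arccos, hsin,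
    ← hvn, Real.cos_arccos (by linarith) ha]

end IsSO3

/-! ### Derivatives of the kernel -/

lemma Lgen_transpose (i : Fin 3) : (Lgen i).transpose = -Lgen i := by
  fin_cases i <;> ext a b <;> fin_cases a <;> fin_cases b <;> simp [Lgen]

lemma trace_Lgen (i : Fin 3) : (Lgen i).trace = 0 := by
  fin_cases i <;> simp [Lgen, Matrix.trace_fin_three]

lemma trace_quatRotation_mul_Lgen (a : ℝ) (v : EuclideanSpace ℝ (Fin 3)) (i : Fin 3) :
    (quatRotation a v * Lgen i).trace = -4 * (a * v i) := by
  fin_cases i <;> simp [quatRotation, Lgen, Matrix.trace_fin_three] <;> ring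

lemma trace_Lgen_mul_quatRotation_mul_Lgen (a : ℝ) (v : EuclideanSpace ℝ (Fin 3)) (i j : Fin 3) :
    (Lgen j * quatRotation a v * Lgen i).trace =
      2 * (v i * v j - (if i = j then a ^ 2 else 0) - a * ∑ k, eps3 i j k * v k) := by
  fin_cases i <;> fin_cases j <;>
    simp [quatRotation, Lgen, Matrix.trace_fin_three, eps3] <;> ring

lemma abs_sum_eps3_mul_le (v : EuclideanSpace ℝ (Fin 3)) (i j : Fin 3) :
    |∑ k, eps3 i j k * v k| ≤ ‖v‖ := by
  have h (k : Fin 3) : |v k| ≤ ‖v‖ := PiLp.norm_apply_le v k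
  fin_cases i <;> fin_cases j <;> simp [eps3, h]

lemma hasDerivAt_trace_mul_exp {n : Type*} [Fintype n] [DecidableEq n] (A L : Matrix n n ℝ) :
    HasDerivAt (fun t : ℝ => (A * NormedSpace.exp (t • L)).trace) (A * L).trace 0 := by
  let : NormedRing (Matrix n n ℝ) := Matrix.linftyOpNormedRing
  let : NormedAlgebra ℝ (Matrix n n ℝ) := Matrix.linftyOpNormedAlgebra
  have h := hasDerivAt_exp_smul_const (𝕂 := ℝ) L (0 : ℝ)
  rw [zero_smul, NormedSpace.exp_zero, one_mul] at h
  let φ : Matrix n n ℝ →L[ℝ] ℝ := LinearMap.toContinuousLinearMap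
    ((Matrix.traceLinearMap n ℝ ℝ).comp (LinearMap.mulLeft ℝ A))
  exact (φ.hasFDerivAt.comp_hasDerivAt (0 : ℝ) h :)

open Polynomial in
lemma hasDerivAt_eval_trace_mul_exp (p : ℝ[X]) (A L : Mat3) :
    HasDerivAt (fun t : ℝ => p.eval (((A * NormedSpace.exp (t • L)).trace - 1) / 2))
      (p.derivative.eval ((A.trace - 1) / 2) * ((A * L).trace / 2)) 0 := by
  have h := (p.hasDerivAt _).comp (0 : ℝ)
    (((hasDerivAt_trace_mul_exp A L).sub_const 1).div_const 2)
  rw [zero_smul, NormedSpace.exp_zero, mul_one] at h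
  exact h

lemma transpose_exp_mul_exp (i : Fin 3) (t : ℝ) :
    (NormedSpace.exp (t • Lgen i)).transpose * NormedSpace.exp (t • Lgen i) = 1 := by
  rw [← Matrix.exp_transpose, Matrix.transpose_smul, Lgen_transpose, smul_neg, Matrix.exp_neg]
  exact Matrix.nonsing_inv_mul _ ((Matrix.isUnit_iff_isUnit_det _).1 (Matrix.isUnit_exp _))

lemma isSO3_exp_smul_Lgen (i : Fin 3) (t : ℝ) : IsSO3 (NormedSpace.exp (t • Lgen i)) := by
  refine ⟨transpose_exp_mul_exp i t, ?_⟩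
  have hsq : NormedSpace.exp (t • Lgen i) =
      NormedSpace.exp ((t / 2) • Lgen i) * NormedSpace.exp ((t / 2) • Lgen i) := by
    rw [← Matrix.exp_add_of_commute _ _ (Commute.refl _), ← add_smul, add_halves]
  have hdet := congrArg Matrix.det (transpose_exp_mul_exp i (t / 2))
  rwa [Matrix.det_mul, Matrix.det_transpose, Matrix.det_one, ← Matrix.det_mul, ← hsq] at hdet

section Kernel

variable {x y : Mat3} (s N : ℕ)

lemma sigmaK_eq_eval (hx : IsSO3 x) (hy : IsSO3 y) :
    sigmaK s N x y = (sigmaPoly s N).eval (((y⁻¹ * x).trace - 1) / 2) := by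
  rw [← (hx.inv_mul hy).cos_rotAngle, sigmaPoly_eval_cos, sigmaK]

lemma sigmaK_comm (hx : IsSO3 x) (hy : IsSO3 y) : sigmaK s N x y = sigmaK s N y x := by
  rw [sigmaK, sigmaK, rotAngle, rotAngle, ← Matrix.trace_transpose (y⁻¹ * x),
    Matrix.transpose_mul, ← hx.inv_eq, ← hy.inv.inv_eq,
    Matrix.nonsing_inv_nonsing_inv y (by simp [hy.2])]

lemma Xx_sigmaK (hx : IsSO3 x) (hy : IsSO3 y) (i : Fin 3) :
    Xx i (sigmaK s N) x y =
      (sigmaPoly s N).derivative.eval (((y⁻¹ * x).trace - 1) / 2) *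
        ((y⁻¹ * x * Lgen i).trace / 2) := by
  rw [← (hasDerivAt_eval_trace_mul_exp _ _ _).deriv, Xx]
  congr 1 with t
  rw [sigmaK_eq_eval s N (hx.mul (isSO3_exp_smul_Lgen i t)) hy, mul_assoc]

lemma Xy_sigmaK (hx : IsSO3 x) (hy : IsSO3 y) (j : Fin 3) :
    Xy j (sigmaK s N) x y = -Xx j (sigmaK s N) x y := by
  have hswap : Xy j (sigmaK s N) x y = Xx j (sigmaK s N) y x := by
    rw [Xx, Xy]
    congr 1 with t
    exact sigmaK_comm s N hx (hy.mul (isSO3_exp_smul_Lgen j t))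
  have hinv : x⁻¹ * y = (y⁻¹ * x).transpose := by
    rw [hx.inv_eq, hy.inv_eq, Matrix.transpose_mul, Matrix.transpose_transpose]
  have htr : ((y⁻¹ * x).transpose * Lgen j).trace = -(y⁻¹ * x * Lgen j).trace := by
    rw [← Matrix.trace_transpose, Matrix.transpose_mul, Matrix.transpose_transpose,
      Lgen_transpose, neg_mul, Matrix.trace_neg, Matrix.trace_mul_comm]
  rw [hswap, Xx_sigmaK s N hy hx, Xx_sigmaK s N hx hy, hinv, Matrix.trace_transpose, htr, neg_div,
    mul_neg]

lemma Xx_Xy_sigmaK (hx : IsSO3 x) (hy : IsSO3 y) (i j : Fin 3) :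
    Xx i (Xy j (sigmaK s N)) x y =
      -((sigmaPoly s N).derivative.derivative.eval (((y⁻¹ * x).trace - 1) / 2) *
          ((y⁻¹ * x * Lgen i).trace / 2) * ((y⁻¹ * x * Lgen j).trace / 2) +
        (sigmaPoly s N).derivative.eval (((y⁻¹ * x).trace - 1) / 2) *
          ((Lgen j * (y⁻¹ * x) * Lgen i).trace / 2)) := by
  have h := ((hasDerivAt_eval_trace_mul_exp (sigmaPoly s N).derivative (y⁻¹ * x) (Lgen i)).mul
    ((hasDerivAt_trace_mul_exp (Lgen j * (y⁻¹ * x)) (Lgen i)).div_const 2)).neg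
  rw [zero_smul, NormedSpace.exp_zero, mul_one, mul_one, Matrix.trace_mul_comm (Lgen j)] at h
  rw [← h.deriv, Xx]
  congr 1 with t
  have hxt := hx.mul (isSO3_exp_smul_Lgen i t)
  simp only [Xy_sigmaK s N hxt hy, Xx_sigmaK s N hxt hy, Pi.neg_apply, Pi.mul_apply, mul_assoc]
  rw [Matrix.trace_mul_comm (Lgen j)]
  simp only [mul_assoc]

lemma sigmaK_self {s N : ℕ} (hx : IsSO3 x) (hg : gnorm s N ≠ 0) : sigmaK s N x x = 1 := by
  rw [sigmaK, hx.inv_mul_self, rotAngle, Matrix.trace_one, Fintype.card_fin]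
  norm_num [sigmaT_zero hg]

lemma Xx_sigmaK_self (hx : IsSO3 x) (i : Fin 3) : Xx i (sigmaK s N) x x = 0 := by
  rw [Xx_sigmaK s N hx hx, hx.inv_mul_self, one_mul, trace_Lgen, zero_div, mul_zero]

lemma trace_Lgen_mul_Lgen (i j : Fin 3) :
    (Lgen j * Lgen i).trace = if i = j then -2 else 0 := by
  fin_cases i <;> fin_cases j <;> simp [Lgen, Matrix.trace_fin_three] <;> norm_num

lemma Xx_Xy_sigmaK_self (hx : IsSO3 x) (i j : Fin 3) :
    Xx i (Xy j (sigmaK s N)) x x = if i = j then -iteratedDeriv 2 (sigmaT s N) 0 else 0 := by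
  rw [Xx_Xy_sigmaK s N hx hx, hx.inv_mul_self, one_mul, one_mul, mul_one, trace_Lgen, trace_Lgen,
    trace_Lgen_mul_Lgen, iteratedDeriv_two_sigmaT, Matrix.trace_one, Fintype.card_fin]
  split_ifs <;> norm_num

variable {n : EuclideanSpace ℝ (Fin 3)}

lemma trace_mul_Lgen_of_axis {z : Mat3} {ω : ℝ}
    (hz : z = quatRotation (Real.cos (ω / 2)) (Real.sin (ω / 2) • n)) (i : Fin 3) :
    (z * Lgen i).trace = -2 * (Real.sin ω * n i) := by
  have hsin : Real.sin ω = 2 * Real.sin (ω / 2) * Real.cos (ω / 2) := by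
    rw [← Real.sin_two_mul, mul_div_cancel₀ _ two_ne_zero]
  rw [hz, trace_quatRotation_mul_Lgen, PiLp.smul_apply, smul_eq_mul, hsin]
  ring

lemma Xx_sigmaK_eq_axis (hx : IsSO3 x) (hy : IsSO3 y)
    (hn : y⁻¹ * x = quatRotation (Real.cos (rotAngle (y⁻¹ * x) / 2))
      (Real.sin (rotAngle (y⁻¹ * x) / 2) • n)) (i : Fin 3) :
    Xx i (sigmaK s N) x y = deriv (sigmaT s N) (rotAngle (y⁻¹ * x)) * n i := by
  rw [Xx_sigmaK s N hx hy, ← (hx.inv_mul hy).cos_rotAngle, trace_mul_Lgen_of_axis hn, deriv_sigmaT]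
  ring

lemma abs_Xx_sigmaK_le (hx : IsSO3 x) (hy : IsSO3 y) (i : Fin 3) :
    |Xx i (sigmaK s N) x y| ≤ |deriv (sigmaT s N) (rotAngle (y⁻¹ * x))| := by
  obtain ⟨n, hn, hz⟩ := (hx.inv_mul hy).exists_axis
  rw [Xx_sigmaK_eq_axis s N hx hy hz, abs_mul]
  exact mul_le_of_le_one_right (abs_nonneg _) (hn ▸ PiLp.norm_apply_le n i)

lemma Xx_Xy_sigmaK_eq_axis (hx : IsSO3 x) (hy : IsSO3 y)
    (hn : y⁻¹ * x = quatRotation (Real.cos (rotAngle (y⁻¹ * x) / 2))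
      (Real.sin (rotAngle (y⁻¹ * x) / 2) • n)) (i j : Fin 3) (hpos : 0 < rotAngle (y⁻¹ * x)) :
    Xx i (Xy j (sigmaK s N)) x y =
      -(n i * n j * iteratedDeriv 2 (sigmaT s N) (rotAngle (y⁻¹ * x))) -
        deriv (sigmaT s N) (rotAngle (y⁻¹ * x)) / 2 *
          (Real.cot (rotAngle (y⁻¹ * x) / 2) * ((if i = j then 1 else 0) - n i * n j) +
            ∑ k, eps3 i j k * n k) := by
  have htr := trace_Lgen_mul_quatRotation_mul_Lgen (Real.cos (rotAngle (y⁻¹ * x) / 2))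
    (Real.sin (rotAngle (y⁻¹ * x) / 2) • n) i j
  rw [← hn] at htr
  rw [Xx_Xy_sigmaK s N hx hy, ← (hx.inv_mul hy).cos_rotAngle, trace_mul_Lgen_of_axis hn,
    trace_mul_Lgen_of_axis hn, htr, iteratedDeriv_two_sigmaT, deriv_sigmaT,
    Real.cot_eq_cos_div_sin]
  have hsin : Real.sin (rotAngle (y⁻¹ * x) / 2) ≠ 0 :=
    (Real.sin_pos_of_pos_of_lt_pi (by linarith) (by linarith [rotAngle_le_pi (y⁻¹ * x)])).ne'
  have hω : rotAngle (y⁻¹ * x) = 2 * (rotAngle (y⁻¹ * x) / 2) := by ring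
  generalize rotAngle (y⁻¹ * x) / 2 = θ at *
  simp only [hω, Real.sin_two_mul, Real.cos_two_mul', PiLp.smul_apply, smul_eq_mul,
    mul_left_comm _ (Real.sin θ), ← Finset.mul_sum]
  split_ifs <;> field_simp <;> ring

lemma cot_half_le {ω : ℝ} (h0 : 0 < ω) (hπ : ω ≤ π) : Real.cot (ω / 2) ≤ 2 / ω := by
  have hsin : 0 < Real.sin (ω / 2) := Real.sin_pos_of_pos_of_lt_pi (by linarith) (by linarith)
  rw [Real.cot_eq_cos_div_sin, div_le_div_iff₀ hsin h0]
  rcases hπ.lt_or_eq with h | rfl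
  · have hcos : 0 < Real.cos (ω / 2) := Real.cos_pos_of_mem_Ioo ⟨by linarith, by linarith⟩
    have htan := Real.lt_tan (x := ω / 2) (by linarith) (by linarith)
    rw [Real.tan_eq_sin_div_cos, lt_div_iff₀ hcos] at htan
    linarith
  · rw [Real.cos_pi_div_two, Real.sin_pi_div_two]
    norm_num

lemma cot_half_nonneg {ω : ℝ} (h0 : 0 ≤ ω) (hπ : ω ≤ π) : 0 ≤ Real.cot (ω / 2) := by
  rw [Real.cot_eq_cos_div_sin]
  exact div_nonneg (Real.cos_nonneg_of_mem_Icc ⟨by linarith, by linarith⟩)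
    (Real.sin_nonneg_of_nonneg_of_le_pi (by linarith) (by linarith))

lemma abs_indicator_sub_mul_le_one (hn : ‖n‖ = 1) (i j : Fin 3) :
    |(if i = j then 1 else 0) - n i * n j| ≤ 1 := by
  have h (k : Fin 3) : |n k| ≤ 1 := hn ▸ PiLp.norm_apply_le n k
  have hmul := mul_le_one₀ (h i) (abs_nonneg _) (h j)
  split_ifs with hij
  · subst hij
    rw [← abs_mul, abs_mul_self] at hmul
    rw [abs_of_nonneg (sub_nonneg.2 hmul)]
    linarith [mul_self_nonneg (n i)]
  · rwa [zero_sub, abs_neg, abs_mul]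

lemma abs_Xx_Xy_sigmaK_le (hx : IsSO3 x) (hy : IsSO3 y) (i j : Fin 3)
    (hpos : 0 < rotAngle (y⁻¹ * x)) :
    |Xx i (Xy j (sigmaK s N)) x y| ≤ |iteratedDeriv 2 (sigmaT s N) (rotAngle (y⁻¹ * x))| +
      |deriv (sigmaT s N) (rotAngle (y⁻¹ * x))| * (1 / rotAngle (y⁻¹ * x) + 1 / 2) := by
  obtain ⟨n, hn, hz⟩ := (hx.inv_mul hy).exists_axis
  rw [Xx_Xy_sigmaK_eq_axis s N hx hy hz i j hpos]
  have hπ := rotAngle_le_pi (y⁻¹ * x)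
  set ω := rotAngle (y⁻¹ * x)
  have h (k : Fin 3) : |n k| ≤ 1 := hn ▸ PiLp.norm_apply_le n k
  have hcot := cot_half_le hpos hπ
  have hcot0 := cot_half_nonneg hpos.le hπ
  calc
    _ ≤ |n i| * |n j| * |iteratedDeriv 2 (sigmaT s N) ω| + |deriv (sigmaT s N) ω| / 2 *
          (Real.cot (ω / 2) * |(if i = j then 1 else 0) - n i * n j| +
            |∑ k, eps3 i j k * n k|) := by
      refine (abs_sub _ _).trans ?_
      rw [abs_neg, abs_mul, abs_mul, abs_mul, abs_div, abs_two]
      gcongr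
      refine (abs_add_le _ _).trans_eq ?_
      rw [abs_mul, abs_of_nonneg hcot0]
    _ ≤ 1 * 1 * |iteratedDeriv 2 (sigmaT s N) ω| +
          |deriv (sigmaT s N) ω| / 2 * (2 / ω * 1 + 1) := by
      gcongr
      · exact h i
      · exact h j
      · exact abs_indicator_sub_mul_le_one hn i j
      · exact hn ▸ abs_sum_eps3_mul_le n i j
    _ = _ := by ring

end Kernel

/-! ### Packing of rotations -/

lemma sin_mul_le_sin_mul {x y : ℝ} (hx : 0 ≤ x) (hxy : x ≤ y) (hy : y ≤ π) :
    Real.sin y * x ≤ Real.sin x * y := by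
  rcases (hx.trans hxy).eq_or_lt with rfl | h
  · simp [le_antisymm hxy hx]
  have hc := strictConcaveOn_sin_Icc.concaveOn.2 (Set.left_mem_Icc.2 Real.pi_pos.le)
    (⟨h.le, hy⟩ : y ∈ Set.Icc 0 π) (sub_nonneg.2 ((div_le_one h).2 hxy) : 0 ≤ 1 - x / y)
    (by positivity : 0 ≤ x / y) (by ring)
  simp only [smul_eq_mul, mul_zero, zero_add, Real.sin_zero, div_mul_cancel₀ x h.ne'] at hc
  calc Real.sin y * x = x / y * Real.sin y * y := by field_simp
    _ ≤ Real.sin x * y := mul_le_mul_of_nonneg_right hc h.le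

lemma convexOn_cos_sqrt : ConvexOn ℝ (Set.Icc 0 (π ^ 2)) (fun u => Real.cos √u) := by
  have hd {u : ℝ} (hu : 0 < u) : HasDerivAt (fun u => Real.cos √u)
      (-Real.sin √u * (1 / (2 * √u))) u :=
    (Real.hasDerivAt_cos _).comp u (Real.hasDerivAt_sqrt hu.ne')
  apply MonotoneOn.convexOn_of_deriv (convex_Icc _ _)
  · exact (Real.continuous_cos.comp Real.continuous_sqrt).continuousOn
  · rw [interior_Icc]
    exact fun u hu => (hd hu.1).differentiableAt.differentiableWithinAt
  · rw [interior_Icc]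
    intro u hu v hv huv
    have hu' := Real.sqrt_pos.2 hu.1
    have hv' := Real.sqrt_pos.2 hv.1
    have h := sin_mul_le_sin_mul hu'.le (Real.sqrt_le_sqrt huv)
      (Real.sqrt_le_iff.2 ⟨Real.pi_pos.le, hv.2.le⟩)
    rw [(hd hu.1).deriv, (hd hv.1).deriv, neg_mul, neg_mul, neg_le_neg_iff, mul_one_div,
      mul_one_div, div_le_div_iff₀ (by positivity) (by positivity)]
    linarith

/-- The third side of a Euclidean triangle is at least that of the spherical triangle with the same
two sides and angle, whose cosine is given by the spherical law of cosines on the right. -/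
lemma cos_sqrt_le_spherical {A B γ : ℝ} (hA : |A| ≤ π / 2) (hB : |B| ≤ π / 2) (hγ : |γ| ≤ 1) :
    Real.cos √(A ^ 2 + B ^ 2 - 2 * (A * B * γ)) ≤
      Real.cos A * Real.cos B + Real.sin A * Real.sin B * γ := by
  obtain ⟨hγ₁, hγ₂⟩ := abs_le.1 hγ
  have hsub : (A - B) ^ 2 ∈ Set.Icc 0 (π ^ 2) :=
    ⟨sq_nonneg _, sq_le_sq' (by linarith [abs_le.1 hA, abs_le.1 hB])
      (by linarith [abs_le.1 hA, abs_le.1 hB])⟩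
  have hadd : (A + B) ^ 2 ∈ Set.Icc 0 (π ^ 2) :=
    ⟨sq_nonneg _, sq_le_sq' (by linarith [abs_le.1 hA, abs_le.1 hB])
      (by linarith [abs_le.1 hA, abs_le.1 hB])⟩
  have h := convexOn_cos_sqrt.2 hsub hadd (by linarith : 0 ≤ (1 + γ) / 2)
    (by linarith : 0 ≤ (1 - γ) / 2) (by ring)
  simp only [smul_eq_mul, Real.sqrt_sq_eq_abs, Real.cos_abs, Real.cos_add, Real.cos_sub] at h
  calc _ = Real.cos √((1 + γ) / 2 * (A - B) ^ 2 + (1 - γ) / 2 * (A + B) ^ 2) := by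
        congr 2; ring
    _ ≤ _ := h.trans_eq (by ring)

lemma cos_norm_smul_sub_smul_le {E : Type*} [NormedAddCommGroup E] [InnerProductSpace ℝ E]
    {A B : ℝ} (hA : |A| ≤ π / 2) (hB : |B| ≤ π / 2) {n m : E} (hn : ‖n‖ = 1) (hm : ‖m‖ = 1) :
    Real.cos ‖A • n - B • m‖ ≤
      Real.cos A * Real.cos B + inner ℝ (Real.sin A • n) (Real.sin B • m) := by
  have hγ : |inner ℝ n m| ≤ 1 := by simpa [hn, hm] using abs_real_inner_le_norm n m
  have hnorm : ‖A • n - B • m‖ = √(A ^ 2 + B ^ 2 - 2 * (A * B * inner ℝ n m)) := by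
    rw [← Real.sqrt_sq (norm_nonneg (A • n - B • m)), norm_sub_sq_real, norm_smul, norm_smul, hn,
      hm, real_inner_smul_left, real_inner_smul_right, mul_one, mul_one, Real.norm_eq_abs,
      Real.norm_eq_abs, sq_abs, sq_abs]
    congr 1
    ring
  rw [hnorm, real_inner_smul_left, real_inner_smul_right, ← mul_assoc (Real.sin A)]
  exact cos_sqrt_le_spherical hA hB hγ

/-- The logarithm `z ↦ rotAngle z • n` of the rotation group does not decrease distances. -/
lemma rotAngle_mul_inv_le {z z' : Mat3} (hz : IsSO3 z) (hz' : IsSO3 z')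
    {n m : EuclideanSpace ℝ (Fin 3)} (hn : ‖n‖ = 1) (hm : ‖m‖ = 1)
    (hzn : z = quatRotation (Real.cos (rotAngle z / 2)) (Real.sin (rotAngle z / 2) • n))
    (hzm : z' = quatRotation (Real.cos (rotAngle z' / 2)) (Real.sin (rotAngle z' / 2) • m)) :
    rotAngle (z * z'⁻¹) ≤ ‖rotAngle z • n - rotAngle z' • m‖ := by
  have habs (u : Mat3) : |rotAngle u / 2| ≤ π / 2 := by
    rw [abs_of_nonneg (by linarith [rotAngle_nonneg u])]
    linarith [rotAngle_le_pi u]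
  have hunit {k : EuclideanSpace ℝ (Fin 3)} (hk : ‖k‖ = 1) (θ : ℝ) :
      Real.cos θ ^ 2 + ‖Real.sin θ • k‖ ^ 2 = 1 := by
    rw [norm_smul, hk, mul_one, Real.norm_eq_abs, sq_abs, Real.cos_sq_add_sin_sq]
  have hcos := cos_norm_smul_sub_smul_le (habs z) (habs z') hn hm
  have hhalf : ‖(rotAngle z / 2) • n - (rotAngle z' / 2) • m‖ =
      ‖rotAngle z • n - rotAngle z' • m‖ / 2 := by
    rw [div_eq_inv_mul, div_eq_inv_mul, mul_smul, mul_smul, ← smul_sub, norm_smul, norm_inv,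
      Real.norm_two, inv_mul_eq_div]
  rw [hhalf] at hcos
  have htrace := trace_quatRotation_mul_transpose (Real.cos (rotAngle z / 2))
    (Real.cos (rotAngle z' / 2)) (Real.sin (rotAngle z / 2) • n) (Real.sin (rotAngle z' / 2) • m)
  rw [← hzn, ← hzm, hunit hn, hunit hm, ← hz'.inv_eq] at htrace
  have hsq := Real.cos_sq (rotAngle (z * z'⁻¹) / 2)
  rw [mul_div_cancel₀ _ two_ne_zero, (hz.mul hz'.inv).cos_rotAngle, htrace] at hsq
  by_contra! hlt
  have hπ := rotAngle_le_pi (z * z'⁻¹)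
  have hcos_lt := Real.cos_lt_cos_of_nonneg_of_le_pi_div_two
    (div_nonneg (norm_nonneg (rotAngle z • n - rotAngle z' • m)) zero_le_two)
    (by linarith) (by linarith : _ < rotAngle (z * z'⁻¹) / 2)
  have hcos_nonneg : 0 ≤ Real.cos (rotAngle (z * z'⁻¹) / 2) := Real.cos_nonneg_of_mem_Icc
    ⟨by linarith [rotAngle_nonneg (z * z'⁻¹)], by linarith⟩
  nlinarith

open MeasureTheory Module in
lemma card_le_of_separated_ball {E ι : Type*} [NormedAddCommGroup E] [NormedSpace ℝ E]
    [FiniteDimensional ℝ E] (T : Finset ι) {w : ι → E} {ε R : ℝ} (hε : 0 < ε) (hR : 0 ≤ R)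
    (hw : ∀ b ∈ T, ‖w b‖ ≤ R) (hsep : ∀ b ∈ T, ∀ c ∈ T, b ≠ c → ε ≤ ‖w b - w c‖) :
    (T.card : ℝ) ≤ (2 * R / ε + 1) ^ finrank ℝ E := by
  let : MeasurableSpace E := borel E
  have : BorelSpace E := ⟨rfl⟩
  let μ : Measure E := Measure.addHaar
  have hδ : 0 < ε / 2 := by positivity
  have hρ : 0 < R + ε / 2 := by positivity
  have hdisj : (T : Set ι).PairwiseDisjoint fun b => Metric.ball (w b) (ε / 2) := by
    intro b hb c hc hbc
    apply Metric.ball_disjoint_ball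
    rw [dist_eq_norm]
    linarith [hsep b hb c hc hbc]
  have hsub : (⋃ b ∈ T, Metric.ball (w b) (ε / 2)) ⊆ Metric.ball 0 (R + ε / 2) := by
    refine Set.iUnion₂_subset fun b hb => Metric.ball_subset_ball' ?_
    rw [dist_zero_right]
    linarith [hw b hb]
  have hvol := measure_mono (μ := μ) hsub
  rw [measure_biUnion_finset hdisj fun c _ => measurableSet_ball] at hvol
  simp only [μ.addHaar_ball_of_pos _ hδ, μ.addHaar_ball_of_pos _ hρ, Finset.sum_const,
    nsmul_eq_mul, ← mul_assoc] at hvol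
  rw [ENNReal.mul_le_mul_iff_left (Metric.measure_ball_pos _ _ zero_lt_one).ne'
    measure_ball_lt_top.ne] at hvol
  have hreal := ENNReal.toReal_le_of_le_ofReal (pow_nonneg hρ.le _) hvol
  rw [ENNReal.toReal_mul, ENNReal.toReal_natCast, ENNReal.toReal_ofReal (by positivity),
    ← le_div_iff₀ (by positivity), ← div_pow] at hreal
  refine hreal.trans_eq (congrArg (· ^ finrank ℝ E) ?_)
  field_simp

section SumInvSq

variable {ι : Type*} {u : ι → ℝ} {D : ℕ}

/-- Removing an element with `u` maximal, which is at least `card T / D`, telescopes the sum. -/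
lemma sum_inv_sq_le_sub (hD : 0 < D) {m : ℕ} (hm : D ≤ m) {T : Finset ι} (hT : T.card = m)
    (hu : ∀ b ∈ T, 1 ≤ u b)
    (hcard : ∀ S ⊆ T, ∀ ρ, 1 ≤ ρ → (∀ b ∈ S, u b ≤ ρ) → (S.card : ℝ) ≤ D * ρ) :
    ∑ b ∈ T, 1 / u b ^ 2 ≤ 2 * (D : ℝ) - D ^ 2 / m := by
  classical
  induction m, hm using Nat.le_induction generalizing T with
  | base =>
    calc ∑ b ∈ T, 1 / u b ^ 2 ≤ T.card • (1 : ℝ) := Finset.sum_le_card_nsmul _ _ _ fun b hb =>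
          div_le_one_of_le₀ (one_le_pow₀ (hu b hb)) (sq_nonneg _)
      _ = 2 * (D : ℝ) - D ^ 2 / D := by
        rw [hT, nsmul_one, sq, mul_self_div_self]
        ring
  | succ m hm ih =>
    obtain ⟨b, hb, hmax⟩ := T.exists_max_image u (Finset.card_pos.1 (by omega))
    have hub := hu b hb
    have hlast := hcard T subset_rfl (u b) hub hmax
    have hrest := ih (by rw [Finset.card_erase_of_mem hb, hT, Nat.add_sub_cancel])
      (fun c hc => hu c (Finset.mem_of_mem_erase hc))
      (fun S hS => hcard S (hS.trans (Finset.erase_subset _ _)))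
    have hm0 : (0 : ℝ) < m := by exact_mod_cast hD.trans_le hm
    rw [hT] at hlast
    push_cast at hlast ⊢
    have hterm : 1 / u b ^ 2 ≤ (D : ℝ) ^ 2 / ((m : ℝ) + 1) ^ 2 := by
      rw [div_le_div_iff₀ (by positivity) (by positivity), one_mul, ← mul_pow]
      gcongr
    have htele : (D : ℝ) ^ 2 / ((m : ℝ) + 1) ^ 2 ≤ D ^ 2 / m - D ^ 2 / (m + 1) := by
      rw [div_sub_div _ _ hm0.ne' (by positivity), div_le_div_iff₀ (by positivity) (by positivity)]
      nlinarith [sq_nonneg (D : ℝ), mul_nonneg (sq_nonneg (D : ℝ)) hm0.le]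
    rw [← Finset.add_sum_erase T _ hb]
    linarith

lemma sum_inv_sq_le (hD : 0 < D) {T : Finset ι} (hu : ∀ b ∈ T, 1 ≤ u b)
    (hcard : ∀ S ⊆ T, ∀ ρ, 1 ≤ ρ → (∀ b ∈ S, u b ≤ ρ) → (S.card : ℝ) ≤ D * ρ) :
    ∑ b ∈ T, 1 / u b ^ 2 ≤ 2 * (D : ℝ) := by
  rcases le_total D T.card with h | h
  · exact (sum_inv_sq_le_sub hD h rfl hu hcard).trans (sub_le_self _ (by positivity))
  · calc ∑ b ∈ T, 1 / u b ^ 2 ≤ T.card • (1 : ℝ) := Finset.sum_le_card_nsmul _ _ _ fun b hb =>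
          div_le_one_of_le₀ (one_le_pow₀ (hu b hb)) (sq_nonneg _)
      _ = T.card := nsmul_one _
      _ ≤ D := by exact_mod_cast h
      _ ≤ 2 * D := by linarith [D.cast_nonneg (α := ℝ)]

end SumInvSq

section Separated

variable {ι : Type*} {x : ι → Mat3} {θ : ℝ}

/-- In the rotation vectors `rotAngle (x b⁻¹ x a) • n b` the points become `θ`-separated points of
a Euclidean ball. -/
lemma card_le_of_rotAngle_le (hx : ∀ a, IsSO3 (x a)) (hθ : 0 < θ)
    (hsep : ∀ a b, a ≠ b → θ ≤ rotAngle ((x b)⁻¹ * x a)) (a : ι) {S : Finset ι} {R : ℝ}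
    (hR : 0 ≤ R) (hS : ∀ b ∈ S, rotAngle ((x b)⁻¹ * x a) ≤ R) :
    (S.card : ℝ) ≤ (2 * R / θ + 1) ^ 3 := by
  choose n hn haxis using fun b => ((hx a).inv_mul (hx b)).exists_axis
  have hcancel (b c : ι) : (x b)⁻¹ * x a * ((x c)⁻¹ * x a)⁻¹ = (x b)⁻¹ * x c := by
    rw [((hx a).inv_mul (hx c)).inv_eq, Matrix.transpose_mul, (hx c).inv_eq,
      Matrix.transpose_transpose, mul_assoc, ← mul_assoc (x a), (hx a).mul_transpose, one_mul]
  rw [← finrank_euclideanSpace_fin (𝕜 := ℝ) (n := 3)]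
  refine card_le_of_separated_ball S (w := fun b => rotAngle ((x b)⁻¹ * x a) • n b) hθ hR
    (fun b hb => ?_) fun b _ c _ hbc => ?_
  · rw [norm_smul, hn, mul_one, Real.norm_of_nonneg (rotAngle_nonneg _)]
    exact hS b hb
  · refine (hsep c b hbc.symm).trans ?_
    rw [← hcancel]
    exact rotAngle_mul_inv_le ((hx a).inv_mul (hx b)) ((hx a).inv_mul (hx c)) (hn b) (hn c)
      (haxis b) (haxis c)

lemma sum_inv_rotAngle_pow_le [Fintype ι] [DecidableEq ι] (hx : ∀ a, IsSO3 (x a)) (hθ : 0 < θ)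
    (hsep : ∀ a b, a ≠ b → θ ≤ rotAngle ((x b)⁻¹ * x a)) {s : ℕ} (hs : 6 ≤ s) (a : ι) :
    ∑ b ∈ Finset.univ.erase a, 1 / rotAngle ((x b)⁻¹ * x a) ^ s ≤ 54 / θ ^ s := by
  have hone {b : ι} (hb : b ∈ Finset.univ.erase a) : 1 ≤ rotAngle ((x b)⁻¹ * x a) / θ :=
    (one_le_div hθ).2 (hsep a b (Finset.ne_of_mem_erase hb).symm)
  have hsum : ∑ b ∈ Finset.univ.erase a, 1 / ((rotAngle ((x b)⁻¹ * x a) / θ) ^ 3) ^ 2 ≤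
      2 * ((27 : ℕ) : ℝ) := by
    refine sum_inv_sq_le (by norm_num) (fun b hb => one_le_pow₀ (hone hb)) fun S _ ρ hρ hle => ?_
    obtain ⟨r, hr, rfl⟩ : ∃ r : ℝ, 1 ≤ r ∧ r ^ 3 = ρ :=
      ⟨ρ ^ (3⁻¹ : ℝ), Real.one_le_rpow hρ (by norm_num),
        Real.rpow_inv_natCast_pow (by linarith) three_ne_zero⟩
    have hle' (b) (hb : b ∈ S) : rotAngle ((x b)⁻¹ * x a) ≤ r * θ :=
      (div_le_iff₀ hθ).1 (le_of_pow_le_pow_left₀ three_ne_zero (by linarith) (hle b hb))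
    calc (S.card : ℝ) ≤ (2 * (r * θ) / θ + 1) ^ 3 :=
          card_le_of_rotAngle_le hx hθ hsep a (by positivity) hle'
      _ = (2 * r + 1) ^ 3 := by field_simp
      _ ≤ (3 * r) ^ 3 := by gcongr; linarith
      _ = ((27 : ℕ) : ℝ) * r ^ 3 := by push_cast; ring
  calc ∑ b ∈ Finset.univ.erase a, 1 / rotAngle ((x b)⁻¹ * x a) ^ s
      ≤ ∑ b ∈ Finset.univ.erase a,
          1 / ((rotAngle ((x b)⁻¹ * x a) / θ) ^ 3) ^ 2 * (1 / θ ^ s) := by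
        refine Finset.sum_le_sum fun b hb => ?_
        have hb1 := hone hb
        rw [← div_mul_cancel₀ (rotAngle ((x b)⁻¹ * x a)) hθ.ne', mul_pow, ← one_div_mul_one_div,
          div_mul_cancel₀ _ hθ.ne', ← pow_mul]
        gcongr
    _ ≤ 54 * (1 / θ ^ s) := by
        rw [← Finset.sum_mul]
        gcongr
        exact hsum.trans_eq (by norm_num)
    _ = 54 / θ ^ s := mul_one_div _ _

end Separated

/-! ### Row sums -/

section Neumann

variable {R : Type*} [NormedRing R] [NormedAlgebra ℝ R] {a b : R} {D : ℝ}

lemma isUnit_of_norm_smul_one_sub_lt [HasSummableGeomSeries R] (h : ‖D • (1 : R) - a‖ < D) :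
    IsUnit a := by
  have hD : 0 < D := (norm_nonneg _).trans_lt h
  have hunit : IsUnit (1 - D⁻¹ • (D • (1 : R) - a)) := isUnit_one_sub_of_norm_lt_one <| by
    rw [norm_smul, Real.norm_of_nonneg (inv_nonneg.2 hD.le), inv_mul_lt_iff₀ hD, mul_one]
    exact h
  rw [smul_sub, smul_smul, inv_mul_cancel₀ hD.ne', one_smul, sub_sub_cancel] at hunit
  simpa [Units.smul_def, smul_smul, hD.ne'] using hunit.smul (Units.mk0 D hD.ne')

lemma norm_le_of_norm_smul_one_sub_lt (h : ‖D • (1 : R) - a‖ < D) (hab : a * b = 1) :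
    ‖b‖ ≤ ‖(1 : R)‖ / (D - ‖D • (1 : R) - a‖) := by
  have hD : 0 < D := (norm_nonneg _).trans_lt h
  have heq : D • b = 1 + (D • (1 : R) - a) * b := by
    rw [sub_mul, hab, smul_mul_assoc, one_mul, add_sub_cancel]
  have hle : D * ‖b‖ ≤ ‖(1 : R)‖ + ‖D • (1 : R) - a‖ * ‖b‖ := calc
    D * ‖b‖ = ‖1 + (D • (1 : R) - a) * b‖ := by rw [← heq, norm_smul, Real.norm_of_nonneg hD.le]
    _ ≤ _ := norm_add_le_of_le le_rfl (norm_mul_le _ _)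
  rw [le_div_iff₀ (sub_pos.2 h)]
  linarith

end Neumann

section RowSumNorm

variable {M : ℕ} {A : Matrix (Fin M) (Fin M) ℝ}

lemma rowSumNorm_le {B : ℝ} (hB : 0 ≤ B) (h : ∀ a, ∑ b, |A a b| ≤ B) : rowSumNorm A ≤ B :=
  Real.iSup_le h hB

attribute [local instance] Matrix.linftyOpNormedRing Matrix.linftyOpNormedAlgebra

lemma rowSumNorm_eq_norm (A : Matrix (Fin M) (Fin M) ℝ) : rowSumNorm A = ‖A‖ := by
  rw [Matrix.linfty_opNorm_def, Finset.sup_univ_eq_ciSup, NNReal.coe_iSup]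
  simp [rowSumNorm]

lemma isUnit_and_rowSumNorm_inv_le {D E : ℝ} (hED : E < D)
    (h : rowSumNorm (D • (1 : Matrix (Fin M) (Fin M) ℝ) - A) ≤ E) :
    IsUnit A ∧ rowSumNorm A⁻¹ ≤ 1 / (D - E) := by
  have hone : rowSumNorm (1 : Matrix (Fin M) (Fin M) ℝ) ≤ 1 :=
    rowSumNorm_le zero_le_one fun a => by simp [Matrix.one_apply, apply_ite]
  rw [rowSumNorm_eq_norm] at h hone
  have hlt := h.trans_lt hED
  have hA := isUnit_of_norm_smul_one_sub_lt hlt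
  refine ⟨hA, ?_⟩
  rw [rowSumNorm_eq_norm]
  calc ‖A⁻¹‖ ≤ ‖(1 : Matrix (Fin M) (Fin M) ℝ)‖ / (D - ‖D • (1 : Matrix _ _ ℝ) - A‖) :=
        norm_le_of_norm_smul_one_sub_lt hlt
          (Matrix.mul_nonsing_inv _ ((Matrix.isUnit_iff_isUnit_det _).1 hA))
    _ ≤ 1 / (D - E) := div_le_div₀ zero_le_one hone (sub_pos.2 hED) (by linarith)

end RowSumNorm

section Constants

lemma one_le_zetaNat {m : ℕ} (hm : 2 ≤ m) : 1 ≤ zetaNat m := by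
  simpa using le_hasSum (hasSum_zetaNat hm) 0 fun n _ => by positivity

variable {s : ℕ}

lemma le_CConst {l : ℕ} (hs : 6 ≤ s) {k : ℝ} (hk : 0 ≤ k) (h : k ≤ 124 * cConst l s) :
    k ≤ CConst l s :=
  h.trans (le_mul_of_one_le_right (hk.trans h) (one_le_zetaNat (by omega)))

lemma two_pow_mul_factorial (hs : s ≠ 0) :
    (2 ^ s * s.factorial : ℝ) = (s - 1).factorial * 2 ^ s * s := by
  rw [← Nat.mul_factorial_pred hs]
  push_cast
  ring

lemma le_CConst_zero (hs : 6 ≤ s) : 54 * (1.03 * (2 ^ s * s.factorial)) ≤ CConst 0 s := by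
  refine le_CConst hs (by positivity) ?_
  rw [cConst, two_pow_mul_factorial (by omega)]
  linarith [show (0 : ℝ) ≤ (s - 1).factorial * 2 ^ s * s by positivity]

lemma le_CConst_one (hs : 6 ≤ s) : 54 * (1.03 * (2 ^ s * s.factorial) * 2) ≤ CConst 1 s := by
  refine le_CConst hs (by positivity) ?_
  rw [cConst, two_pow_mul_factorial (by omega)]
  linarith [show (0 : ℝ) ≤ (s - 1).factorial * 2 ^ s * s by positivity]

lemma le_CConst_two (hs : 6 ≤ s) : 54 * (1.03 * (2 ^ s * s.factorial) * 8) ≤ CConst 2 s := by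
  refine le_CConst hs (by positivity) ?_
  rw [cConst, two_pow_mul_factorial (by omega)]
  linarith [show (0 : ℝ) ≤ (s - 1).factorial * 2 ^ s * s by positivity,
    show (0 : ℝ) ≤ (s - 1).factorial * 2 ^ s by positivity]

end Constants

lemma abs_Xx_Xy_sigmaK_le_decay {s N : ℕ} (hs : 6 ≤ s) (hN : 2 * s ≤ N) {x y : Mat3}
    (hx : IsSO3 x) (hy : IsSO3 y) (hxy : 1 / ((N : ℝ) + 1) ≤ rotAngle (y⁻¹ * x)) (i j : Fin 3) :
    |Xx i (Xy j (sigmaK s N)) x y| ≤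
      1.03 * (2 ^ s * s.factorial) * 8 * ((N : ℝ) + 1) ^ 2 /
        (((N : ℝ) + 1) * rotAngle (y⁻¹ * x)) ^ s := by
  have : (1 : ℝ) ≤ (N : ℝ) + 1 := le_add_of_nonneg_left N.cast_nonneg
  have hpos : 0 < rotAngle (y⁻¹ * x) := lt_of_lt_of_le (by positivity) hxy
  have hfirst := abs_iteratedDeriv_sigmaT_le hs hN one_le_two hpos (rotAngle_le_pi _)
  have hsecond := abs_iteratedDeriv_sigmaT_le hs hN le_rfl hpos (rotAngle_le_pi _)
  simp only [decayConst, iteratedDeriv_one, pow_one] at hfirst hsecond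
  have hcot : 1 / rotAngle (y⁻¹ * x) + 1 / 2 ≤ 3 / 2 * ((N : ℝ) + 1) := by
    linarith [(one_div_le hpos (by positivity)).2 hxy]
  refine (abs_Xx_Xy_sigmaK_le s N hx hy i j hpos).trans
    ((add_le_add hsecond (mul_le_mul hfirst hcot (by positivity) (by positivity))).trans_eq ?_)
  ring

section SeparatedPoints

variable {s N M : ℕ} {x : Fin M → Mat3} {ν : ℝ}

lemma rowSumNorm_le_of_decay (hs : 6 ≤ s) (hx : ∀ a, IsSO3 (x a)) {n : ℝ} (hn : 0 < n)
    (hν : 0 < ν) (hsep : ∀ a b, a ≠ b → ν / n ≤ rotAngle ((x b)⁻¹ * x a))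
    {A : Matrix (Fin M) (Fin M) ℝ} {K : ℝ} (hK : 0 ≤ K) (hdiag : ∀ a, A a a = 0)
    (hoff : ∀ a b, a ≠ b → |A a b| ≤ K / (n * rotAngle ((x b)⁻¹ * x a)) ^ s) :
    rowSumNorm A ≤ 54 * K / ν ^ s := by
  refine rowSumNorm_le (by positivity) fun a => ?_
  rw [← Finset.add_sum_erase _ _ (Finset.mem_univ a), hdiag, abs_zero, zero_add]
  calc ∑ b ∈ Finset.univ.erase a, |A a b|
      ≤ ∑ b ∈ Finset.univ.erase a, K / n ^ s * (1 / rotAngle ((x b)⁻¹ * x a) ^ s) := by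
        refine Finset.sum_le_sum fun b hb => ?_
        refine (hoff a b (Finset.ne_of_mem_erase hb).symm).trans_eq ?_
        rw [mul_pow, div_mul_div_comm, mul_one]
    _ ≤ K / n ^ s * (54 / (ν / n) ^ s) := by
        rw [← Finset.mul_sum]
        gcongr
        exact sum_inv_rotAngle_pow_le hx (by positivity) hsep hs a
    _ = 54 * K / ν ^ s := by rw [div_pow]; field_simp

variable (hs : 6 ≤ s) (hN : 2 * s ≤ N) (hx : ∀ a, IsSO3 (x a))
  (hsep : ∀ a b, a ≠ b → ν / ((N : ℝ) + 1) ≤ rotAngle ((x b)⁻¹ * x a))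
include hs hN hx hsep

lemma rowSumNorm_one_sub_sigmaK_le (hν : 0 < ν) :
    rowSumNorm (1 - Matrix.of fun a b => sigmaK s N (x a) (x b)) ≤ CConst 0 s / ν ^ s := by
  refine (rowSumNorm_le_of_decay hs hx N.cast_add_one_pos hν hsep
    (K := 1.03 * (2 ^ s * s.factorial)) (by positivity) (fun a => ?_) fun a b hab => ?_).trans ?_
  · simp [sigmaK_self (hx a) (gnorm_pos hs hN).ne']
  · have hpos := (div_pos hν N.cast_add_one_pos).trans_le (hsep a b hab)
    simpa [hab, decayConst, sigmaK] using
      abs_iteratedDeriv_sigmaT_le hs hN zero_le_two hpos (rotAngle_le_pi _)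
  · gcongr
    exact le_CConst_zero hs

lemma rowSumNorm_Xx_sigmaK_le (hν : 0 < ν) (i : Fin 3) :
    rowSumNorm (Matrix.of fun a b => Xx i (sigmaK s N) (x a) (x b)) ≤
      CConst 1 s * ((N : ℝ) + 1) / ν ^ s := by
  refine (rowSumNorm_le_of_decay hs hx N.cast_add_one_pos hν hsep
    (K := 1.03 * (2 ^ s * s.factorial) * 2 * ((N : ℝ) + 1)) (by positivity)
    (fun a => Xx_sigmaK_self s N (hx a) i) fun a b hab => ?_).trans ?_
  · have hpos := (div_pos hν N.cast_add_one_pos).trans_le (hsep a b hab)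
    refine (abs_Xx_sigmaK_le s N (hx a) (hx b) i).trans ?_
    simpa [decayConst] using
      abs_iteratedDeriv_sigmaT_le hs hN one_le_two hpos (rotAngle_le_pi _)
  · rw [← mul_assoc]
    gcongr
    exact le_CConst_one hs

lemma rowSumNorm_Xy_sigmaK_le (hν : 0 < ν) (i : Fin 3) :
    rowSumNorm (Matrix.of fun a b => Xy i (sigmaK s N) (x a) (x b)) ≤
      CConst 1 s * ((N : ℝ) + 1) / ν ^ s := by
  simp only [rowSumNorm, Matrix.of_apply, Xy_sigmaK s N (hx _) (hx _), abs_neg]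
  exact rowSumNorm_Xx_sigmaK_le hs hN hx hsep hν i

lemma rowSumNorm_smul_one_sub_Xx_Xy_sigmaK_le (hν : 1 ≤ ν) (i j : Fin 3) :
    rowSumNorm ((if i = j then -iteratedDeriv 2 (sigmaT s N) 0 else 0) •
        (1 : Matrix (Fin M) (Fin M) ℝ) -
          Matrix.of fun a b => Xx i (Xy j (sigmaK s N)) (x a) (x b)) ≤
      CConst 2 s * ((N : ℝ) + 1) ^ 2 / ν ^ s := by
  have hν₀ : 0 < ν := zero_lt_one.trans_le hν
  refine (rowSumNorm_le_of_decay hs hx N.cast_add_one_pos hν₀ hsep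
    (K := 1.03 * (2 ^ s * s.factorial) * 8 * ((N : ℝ) + 1) ^ 2) (by positivity)
    (fun a => ?_) fun a b hab => ?_).trans ?_
  · rw [Matrix.sub_apply, Matrix.smul_apply, Matrix.of_apply, Matrix.one_apply_eq,
      Xx_Xy_sigmaK_self s N (hx a), smul_eq_mul, mul_one, sub_self]
  · have hsep_one := (div_le_div_of_nonneg_right hν N.cast_add_one_pos.le).trans (hsep a b hab)
    simpa only [Matrix.sub_apply, Matrix.smul_apply, Matrix.of_apply, Matrix.one_apply_ne hab,
      smul_zero, zero_sub, abs_neg] using abs_Xx_Xy_sigmaK_le_decay hs hN (hx a) (hx b) hsep_one i j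
  · rw [← mul_assoc]
    gcongr
    exact le_CConst_two hs

lemma isUnit_and_rowSumNorm_inv_Xx_Xy_sigmaK_le (hν : 1 ≤ ν) (i : Fin 3)
    (hlt : CConst 2 s / (0.999 / (2 * ((s : ℝ) + 1)) * ν ^ s) < 1) :
    IsUnit (Matrix.of fun a b => Xx i (Xy i (sigmaK s N)) (x a) (x b)) ∧
      rowSumNorm (Matrix.of fun a b => Xx i (Xy i (sigmaK s N)) (x a) (x b))⁻¹ ≤
        1 / (0.999 / (2 * ((s : ℝ) + 1)) * ((N : ℝ) + 1) ^ 2 *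
          (1 - CConst 2 s / (0.999 / (2 * ((s : ℝ) + 1)) * ν ^ s))) := by
  have hD := neg_iteratedDeriv_two_sigmaT_zero_ge hs hN
  set c : ℝ := 0.999 / (2 * ((s : ℝ) + 1))
  have hc : 0 < c := by positivity
  have : 0 < ν := zero_lt_one.trans_le hν
  have hgap : 0 < c * ((N : ℝ) + 1) ^ 2 * (1 - CConst 2 s / (c * ν ^ s)) :=
    mul_pos (by positivity) (sub_pos.2 hlt)
  have hexpand : c * ((N : ℝ) + 1) ^ 2 * (1 - CConst 2 s / (c * ν ^ s)) =
      c * ((N : ℝ) + 1) ^ 2 - CConst 2 s * ((N : ℝ) + 1) ^ 2 / ν ^ s := by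
    field_simp
  rw [hexpand] at hgap ⊢
  obtain ⟨hunit, hinv⟩ := isUnit_and_rowSumNorm_inv_le
    (lt_of_lt_of_le (sub_pos.1 hgap) hD)
    (by simpa only [if_true] using rowSumNorm_smul_one_sub_Xx_Xy_sigmaK_le hs hN hx hsep hν i i)
  exact ⟨hunit, hinv.trans (one_div_le_one_div_of_le hgap (by linarith))⟩

end SeparatedPoints

theorem interpolation_matrix_block_bounds_general
    (s N : ℕ) (hs : 6 ≤ s) (hN : 2 * s ≤ N) (ν : ℝ) (hν : 1 ≤ ν)
    (M : ℕ) (x : Fin M → Mat3) (hx : ∀ a, IsSO3 (x a))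
    (hsep : ∀ a b, a ≠ b → ν / ((N : ℝ) + 1) ≤ rotAngle ((x b)⁻¹ * (x a))) :
    (rowSumNorm (1 - Matrix.of fun a b => sigmaK s N (x a) (x b)) ≤ CConst 0 s / ν ^ s) ∧
    (CConst 0 s / ν ^ s < 1 →
      IsUnit (Matrix.of fun a b => sigmaK s N (x a) (x b)) ∧
      rowSumNorm (Matrix.of fun a b => sigmaK s N (x a) (x b))⁻¹ ≤
        1 / (1 - CConst 0 s / ν ^ s)) ∧
    (∀ i : Fin 3,
      rowSumNorm (Matrix.of fun a b => Xx i (sigmaK s N) (x a) (x b)) ≤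
        CConst 1 s * ((N : ℝ) + 1) / ν ^ s ∧
      rowSumNorm (Matrix.of fun a b => Xy i (sigmaK s N) (x a) (x b)) ≤
        CConst 1 s * ((N : ℝ) + 1) / ν ^ s) ∧
    (∀ i j : Fin 3, i ≠ j →
      rowSumNorm (Matrix.of fun a b => Xx i (Xy j (sigmaK s N)) (x a) (x b)) ≤
        CConst 2 s * ((N : ℝ) + 1) ^ 2 / ν ^ s) ∧
    (∀ i : Fin 3,
      rowSumNorm ((-(iteratedDeriv 2 (sigmaT s N) 0)) • (1 : Matrix (Fin M) (Fin M) ℝ)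
          - Matrix.of fun a b => Xx i (Xy i (sigmaK s N)) (x a) (x b)) ≤
        CConst 2 s * ((N : ℝ) + 1) ^ 2 / ν ^ s ∧
      (CConst 2 s / ((0.999 / (2 * ((s : ℝ) + 1))) * ν ^ s) < 1 →
        IsUnit (Matrix.of fun a b => Xx i (Xy i (sigmaK s N)) (x a) (x b)) ∧
        rowSumNorm (Matrix.of fun a b => Xx i (Xy i (sigmaK s N)) (x a) (x b))⁻¹ ≤
          1 / ((0.999 / (2 * ((s : ℝ) + 1))) * ((N : ℝ) + 1) ^ 2 *
            (1 - CConst 2 s / ((0.999 / (2 * ((s : ℝ) + 1))) * ν ^ s))))) := by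
  have hν₀ : 0 < ν := zero_lt_one.trans_le hν
  have hzero := rowSumNorm_one_sub_sigmaK_le hs hN hx hsep hν₀
  have hsecond := rowSumNorm_smul_one_sub_Xx_Xy_sigmaK_le hs hN hx hsep hν
  exact ⟨hzero,
    fun hlt => isUnit_and_rowSumNorm_inv_le hlt (by rwa [one_smul]),
    fun i => ⟨rowSumNorm_Xx_sigmaK_le hs hN hx hsep hν₀ i,
      rowSumNorm_Xy_sigmaK_le hs hN hx hsep hν₀ i⟩,
    fun i j hij => by simpa [rowSumNorm, hij] using hsecond i j,
    fun i => ⟨by simpa only [if_true] using hsecond i i,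
      isUnit_and_rowSumNorm_inv_Xx_Xy_sigmaK_le hs hN hx hsep hν i⟩⟩

theorem interpolation_matrix_block_bounds
    (s N : ℕ) (hs_even : Even s) (hs : 6 ≤ s) (hN : 2 * s ≤ N)
    (ν : ℝ) (hν : π ≤ ν)
    (M : ℕ) (x : Fin M → Mat3) (hx : ∀ a, IsSO3 (x a)) (hinj : Function.Injective x)
    (hsep : ∀ a b, a ≠ b → ν / ((N : ℝ) + 1) ≤ rotAngle ((x b)⁻¹ * (x a))) :
    (rowSumNorm (1 - Matrix.of fun a b => sigmaK s N (x a) (x b)) ≤ CConst 0 s / ν ^ s) ∧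
    (CConst 0 s / ν ^ s < 1 →
      IsUnit (Matrix.of fun a b => sigmaK s N (x a) (x b)) ∧
      rowSumNorm (Matrix.of fun a b => sigmaK s N (x a) (x b))⁻¹ ≤
        1 / (1 - CConst 0 s / ν ^ s)) ∧
    (∀ i : Fin 3,
      rowSumNorm (Matrix.of fun a b => Xx i (sigmaK s N) (x a) (x b)) ≤
        CConst 1 s * ((N : ℝ) + 1) / ν ^ s ∧
      rowSumNorm (Matrix.of fun a b => Xy i (sigmaK s N) (x a) (x b)) ≤
        CConst 1 s * ((N : ℝ) + 1) / ν ^ s) ∧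
    (∀ i j : Fin 3, i ≠ j →
      rowSumNorm (Matrix.of fun a b => Xx i (Xy j (sigmaK s N)) (x a) (x b)) ≤
        CConst 2 s * ((N : ℝ) + 1) ^ 2 / ν ^ s) ∧
    (∀ i : Fin 3,
      rowSumNorm ((-(iteratedDeriv 2 (sigmaT s N) 0)) • (1 : Matrix (Fin M) (Fin M) ℝ)
          - Matrix.of fun a b => Xx i (Xy i (sigmaK s N)) (x a) (x b)) ≤
        CConst 2 s * ((N : ℝ) + 1) ^ 2 / ν ^ s ∧
      (CConst 2 s / ((0.999 / (2 * ((s : ℝ) + 1))) * ν ^ s) < 1 →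
        IsUnit (Matrix.of fun a b => Xx i (Xy i (sigmaK s N)) (x a) (x b)) ∧
        rowSumNorm (Matrix.of fun a b => Xx i (Xy i (sigmaK s N)) (x a) (x b))⁻¹ ≤
          1 / ((0.999 / (2 * ((s : ℝ) + 1))) * ((N : ℝ) + 1) ^ 2 *
            (1 - CConst 2 s / ((0.999 / (2 * ((s : ℝ) + 1))) * ν ^ s))))) := by
  exact interpolation_matrix_block_bounds_general s N hs hN ν
    (by linarith [Real.pi_gt_three]) M x hx hsep
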